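/- arXiv:1603.06493 — 4 statements merged into one kernel-verified Lean document; each statement's English description precedes it below -/
import Mathlib

section
/- Suppose (A, m) is an admissible pair with constant κ. Then the solution set P = {u ∈ ℝ^N : u_i ≥ 0 and f_i(u) ≥ 0 for all i = 1,…,N} of the system of linear inequalities is a compact convex set, and its set of extreme points is exactly {u_I : I ⊆ {1,…,N}}. -/
open MeasureTheory Filter

/-- Principal minor of `A` over the index set `I`. -/
noncomputable def minorP {N : ℕ} (A : Matrix (Fin N) (Fin N) ℝ) (I : Finset (Fin N)) : ℝ :=
  Matrix.det (Matrix.of fun i j : {x : Fin N // x ∈ I} => A i.1 j.1)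

/-- The determinant `Δ_{I,j}` obtained by bordering the principal minor over `I`
with the column `m` and the row `j`. -/
noncomputable def minorM {N : ℕ} (A : Matrix (Fin N) (Fin N) ℝ) (m : Fin N → ℝ)
    (I : Finset (Fin N)) (j : Fin N) : ℝ :=
  Matrix.det (Matrix.of fun k l : Option {x : Fin N // x ∈ I} =>
    match k, l with
    | some k', some l' => A k'.1 l'.1
    | some k', none => m k'.1
    | none, some l' => A j l'.1
    | none, none => m j)

/-- An admissible pair of coefficients with constant `κ`:
entries of `A` and `m` bounded by `1/κ`, all principal minors `Δ_I ≥ κ`,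
and all bordered determinants `Δ_{I,j} ≥ κ` for `j ∉ I`. -/
def IsAdmissible {N : ℕ} (κ : ℝ) (A : Matrix (Fin N) (Fin N) ℝ) (m : Fin N → ℝ) : Prop :=
  (∀ i j, |A i j| ≤ 1 / κ) ∧ (∀ i, m i ≤ 1 / κ) ∧
    (∀ I : Finset (Fin N), κ ≤ minorP A I) ∧
    (∀ I : Finset (Fin N), ∀ j ∉ I, κ ≤ minorM A m I j)

/-- `f_i(u) = m_i − Σ_j a_{ij} u_j`. -/
def fComp {N : ℕ} (A : Matrix (Fin N) (Fin N) ℝ) (m : Fin N → ℝ) (u : Fin N → ℝ)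
    (i : Fin N) : ℝ :=
  m i - ∑ j, A i j * u j

/-!
Write `Δ_S` for the principal minors of `A`, all positive. If `u` vanishes off `J ∪ {k}` and
`f_j(u) = 0` on `J`, Cramer's rule gives `Δ_{J,k} = u_k Δ_{J ∪ {k}} + f_k(u) Δ_J`. Hence every
`u_I` is strictly complementary: `f_i(u_I) > 0` for `i ∈ I` and `(u_I)_j > 0` for `j ∉ I`. In
particular `u_I ∈ P`, and it is extreme because its tight constraints determine it.

Compactness comes from the Fiedler–Pták theorem: a matrix with positive principal minors reverses
the sign of no nonzero vector, so `x ↦ ∑ᵢ max (xᵢ (A x)ᵢ) 0` grows quadratically, while on `P` it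
grows at most linearly.

That every extreme point is a `u_I` amounts to the absence of points of `P` with
`u_i = f_i(u) = 0`. For `S` a set of indices, let `P_S` be the polytope of the subsystem with
indices in `S`; then `f_i > 0` on `P_S` for all `i ∉ S`, by induction on `S`. Indeed `f_i` attains
its minimum over `P_S` at an extreme point `w`. For no `j ∈ S` is `w_j = f_j(w) = 0`, since
`w_j = 0` puts `w` in `P_{S \ {j}}`. An index `j ∈ S` with `w_j` and `f_j(w)` both nonzero would
leave a line along which `w` can move both ways. So `w` is one of the `u_I` with `i ∈ I`, where
`f_i` is positive.
-/

open scoped Matrix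

/-! ### Extreme points -/

section ExtremePoints

theorem exists_pos_forall_mul_abs_le {κ 𝕜 : Type*} [Finite κ] [Field 𝕜] [LinearOrder 𝕜]
    [IsStrictOrderedRing 𝕜] {a b : κ → 𝕜} (ha : ∀ k, 0 ≤ a k) (hab : ∀ k, a k = 0 → b k = 0) :
    ∃ ε > 0, ∀ k, ε * |b k| ≤ a k := by
  have pointwise : ∀ k, ∃ ε > 0, ε * |b k| ≤ a k := fun k => by
    by_cases hb : b k = 0
    · exact ⟨1, one_pos, by simpa [hb] using ha k⟩
    · have hak : 0 < a k := (ha k).lt_of_ne' (mt (hab k) hb)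
      exact ⟨a k / |b k|, by positivity, (div_mul_cancel₀ _ (abs_ne_zero.2 hb)).le⟩
  choose ε hε hεa using pointwise
  obtain ⟨k₀, hk₀⟩ := Finite.exists_min fun k : Option κ => k.elim 1 ε
  refine ⟨k₀.elim 1 ε, by cases k₀ <;> simp [hε], fun k => ?_⟩
  exact (mul_le_mul_of_nonneg_right (hk₀ (some k)) (abs_nonneg _)).trans (hεa k)

theorem mem_extremePoints_setOf_forall_le_iff {κ 𝕜 E : Type*} [Finite κ] [Field 𝕜] [LinearOrder 𝕜]
    [IsStrictOrderedRing 𝕜] [AddCommGroup E] [Module 𝕜 E] {L : κ → E →ₗ[𝕜] 𝕜} {b : κ → 𝕜} {u : E} :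
    u ∈ {v | ∀ k, L k v ≤ b k}.extremePoints 𝕜 ↔
      (∀ k, L k u ≤ b k) ∧ ∀ d, (∀ k, L k u = b k → L k d = 0) → d = 0 := by
  rw [mem_extremePoints_iff_left]
  refine and_congr_right fun hu => ⟨fun hext d hd => ?_, fun hdet x hx y hy hxy => ?_⟩
  · obtain ⟨ε, hε, hεd⟩ := exists_pos_forall_mul_abs_le (fun k => sub_nonneg.2 (hu k))
      fun k hk => hd k (sub_eq_zero.1 hk).symm
    have hbound : ∀ k, |ε * L k d| ≤ b k - L k u := fun k => by
      rw [abs_mul, abs_of_pos hε]; exact hεd k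
    have hsub : ∀ k, L k (u - ε • d) ≤ b k := fun k => by
      simp only [map_sub, map_smul, smul_eq_mul]
      linarith [neg_abs_le (ε * L k d), hbound k]
    have hadd : ∀ k, L k (u + ε • d) ≤ b k := fun k => by
      simp only [map_add, map_smul, smul_eq_mul]
      linarith [le_abs_self (ε * L k d), hbound k]
    let _ : Invertible (2 : 𝕜) := invertibleOfNonzero two_ne_zero
    have := hext _ hsub _ hadd (mem_openSegment_sub_add u (ε • d))
    simpa [hε.ne'] using this
  · obtain ⟨s, t, hs, ht, hst, rfl⟩ := hxy
    have htight : ∀ k, L k (s • x + t • y) = b k → L k x = b k := fun k hk => by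
      refine le_antisymm (hx k) (le_of_mul_le_mul_left ?_ hs)
      have hsum : s * L k x + t * L k y = b k := by simpa using hk
      have := mul_le_mul_of_nonneg_left (hy k) ht.le
      linear_combination this - hsum + b k * hst
    refine sub_eq_zero.1 (hdet _ fun k hk => ?_)
    rw [map_sub, htight k hk, hk, sub_self]

theorem exists_mem_extremePoints_forall_le {E : Type*} [AddCommGroup E] [Module ℝ E]
    [TopologicalSpace E] [T2Space E] [IsTopologicalAddGroup E] [ContinuousSMul ℝ E]
    [LocallyConvexSpace ℝ E] {s : Set E} (hs : IsCompact s) (hne : s.Nonempty)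
    (l : StrongDual ℝ E) :
    ∃ w ∈ s.extremePoints ℝ, ∀ v ∈ s, l v ≤ l w := by
  have hexp : IsExposed ℝ s (l.toExposed s) := ContinuousLinearMap.toExposed.isExposed
  obtain ⟨v, hv, hmax⟩ := hs.exists_isMaxOn hne l.continuous.continuousOn
  obtain ⟨w, hw⟩ := (hexp.isCompact hs).extremePoints_nonempty ⟨v, hv, hmax⟩
  exact ⟨w, hexp.isExtreme.extremePoints_subset_extremePoints hw, hw.1.2⟩

end ExtremePoints

/-! ### Principal and bordered minors -/

section Minors

variable {ι R : Type*} [DecidableEq ι] [CommRing R]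

/-- The principal minor `Δ_S` of `A`, for `A` indexed by any type. -/
def principalMinor (A : Matrix ι ι R) (S : Finset ι) : R :=
  (A.submatrix ((↑) : S → ι) (↑)).det

/-- The bordered minor `Δ_{J,k}`, encoded as the principal minor over `J ∪ {k}` of the matrix
obtained from `A` by replacing column `k` with `m`. It is meaningful for `k ∉ J`. -/
def borderedMinor (A : Matrix ι ι R) (m : ι → R) (J : Finset ι) (k : ι) : R :=
  principalMinor (A.updateCol k m) (insert k J)

/-- The matrix `A` with the rows outside `S` replaced by those of the identity. Its determinant is
the principal minor over `S`, and it lets all principal submatrices act on the same space. -/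
def paddedSubmatrix (A : Matrix ι ι R) (S : Finset ι) : Matrix ι ι R :=
  Matrix.of fun i j => if i ∈ S then A i j else (1 : Matrix ι ι R) i j

theorem paddedSubmatrix_apply (A : Matrix ι ι R) (S : Finset ι) (i j : ι) :
    paddedSubmatrix A S i j = if i ∈ S then A i j else (1 : Matrix ι ι R) i j :=
  rfl

theorem paddedSubmatrix_updateRow_single (A : Matrix ι ι R) (S : Finset ι) (k : ι) :
    (paddedSubmatrix A S).updateRow k (Pi.single k 1) = paddedSubmatrix A (S.erase k) := by
  ext i j
  rcases eq_or_ne i k with rfl | hi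
  · simp [paddedSubmatrix_apply, Matrix.one_eq_pi_single]
  · simp [paddedSubmatrix_apply, hi]

variable [Fintype ι]

theorem paddedSubmatrix_mulVec (A : Matrix ι ι R) (S : Finset ι) (u : ι → R) :
    paddedSubmatrix A S *ᵥ u = S.piecewise (A *ᵥ u) u := by
  ext i
  by_cases hi : i ∈ S <;>
    simp [Matrix.mulVec, dotProduct, paddedSubmatrix_apply, Matrix.one_apply, hi]

theorem det_paddedSubmatrix (A : Matrix ι ι R) (S : Finset ι) :
    (paddedSubmatrix A S).det = principalMinor A S := by
  have hblock : (paddedSubmatrix A S).toSquareBlockProp (· ∈ S) = A.submatrix (↑) (↑) := by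
    ext i j
    simp [Matrix.toSquareBlockProp, paddedSubmatrix_apply, i.2]
  have hone : (paddedSubmatrix A S).toSquareBlockProp (· ∉ S) = 1 := by
    ext i j
    simp [Matrix.toSquareBlockProp, paddedSubmatrix_apply, Matrix.one_apply, i.2, Subtype.ext_iff]
  rw [Matrix.twoBlockTriangular_det _ (· ∈ S), hblock, hone, Matrix.det_one, mul_one,
    principalMinor]
  · congr!
  · intro i hi j hj
    rw [paddedSubmatrix_apply, if_neg hi, Matrix.one_apply_ne (ne_of_mem_of_not_mem hj hi).symm]

theorem det_updateCol_single_eq_det_updateRow_single (B : Matrix ι ι R) (k : ι) :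
    (B.updateCol k (Pi.single k 1)).det = (B.updateRow k (Pi.single k 1)).det := by
  rw [← Matrix.cramer_apply, Matrix.cramer_eq_adjugate_mulVec, Matrix.mulVec_single_one,
    Matrix.col_apply, Matrix.adjugate_apply]

theorem det_updateCol_mulVec_add_single (B : Matrix ι ι R) (u : ι → R) (c : R) (k : ι) :
    (B.updateCol k (B *ᵥ u + c • Pi.single k 1)).det =
      u k * B.det + c * (B.updateRow k (Pi.single k 1)).det := by
  have hcomb : B *ᵥ u = fun i => ∑ j, u j • B i j := by
    ext i
    simp [Matrix.mulVec, dotProduct, mul_comm]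
  rw [Matrix.det_updateCol_add, Matrix.det_updateCol_smul, hcomb, Matrix.det_updateCol_sum,
    det_updateCol_single_eq_det_updateRow_single, smul_eq_mul]

theorem borderedMinor_eq_add {A : Matrix ι ι R} {m : ι → R} {J : Finset ι} {k : ι} {u : ι → R}
    (hk : k ∉ J) (hu : ∀ i ∉ insert k J, u i = 0) (hA : ∀ j ∈ J, (A *ᵥ u) j = m j) :
    borderedMinor A m J k =
      u k * principalMinor A (insert k J) + (m k - (A *ᵥ u) k) * principalMinor A J := by
  set B := paddedSubmatrix A (insert k J) with hB
  have hcol : paddedSubmatrix (A.updateCol k m) (insert k J) =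
      B.updateCol k (B *ᵥ u + (m k - (A *ᵥ u) k) • Pi.single k 1) := by
    ext i j
    rcases ne_or_eq j k with hj | rfl
    · simp [hB, paddedSubmatrix_apply, hj]
    rw [Matrix.updateCol_self, paddedSubmatrix_apply, Matrix.updateCol_self, hB,
      paddedSubmatrix_mulVec]
    rcases eq_or_ne i j with rfl | hij
    · simp
    by_cases hi : i ∈ J
    · simp [hi, hij, hA]
    · have hi' : i ∉ insert j J := by simp [hi, hij]
      simp [hi, hij, hu i hi']
  rw [borderedMinor, ← det_paddedSubmatrix, hcol, det_updateCol_mulVec_add_single, hB,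
    paddedSubmatrix_updateRow_single, Finset.erase_insert hk, det_paddedSubmatrix,
    det_paddedSubmatrix]

theorem eq_zero_of_principalMinor_ne_zero [IsDomain R] {A : Matrix ι ι R} {S : Finset ι} {d : ι → R}
    (hS : principalMinor A S ≠ 0) (hd : ∀ i ∉ S, d i = 0) (hA : ∀ i ∈ S, (A *ᵥ d) i = 0) :
    d = 0 := by
  refine Matrix.eq_zero_of_mulVec_eq_zero (M := paddedSubmatrix A S) ?_ ?_
  · rwa [det_paddedSubmatrix]
  · ext i
    by_cases hi : i ∈ S <;> simp [paddedSubmatrix_mulVec, hi, hd, hA]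

end Minors

/-! ### Matrices with positive principal minors -/

section PMatrix

variable {ι R : Type*} [DecidableEq ι] [CommRing R]

theorem principalMinor_add_diagonal_single [Finite ι] (A : Matrix ι ι R) (k : ι) (x : R)
    (S : Finset ι) :
    principalMinor (A + Matrix.diagonal (Pi.single k x)) S =
      principalMinor A S + if k ∈ S then x * principalMinor A (S.erase k) else 0 := by
  cases nonempty_fintype ι
  simp only [← det_paddedSubmatrix]
  split_ifs with hk
  · have hrow : paddedSubmatrix (A + Matrix.diagonal (Pi.single k x)) S =
        (paddedSubmatrix A S).updateRow k
          ((paddedSubmatrix A S).row k + x • Pi.single k 1) := by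
      ext i j
      rcases eq_or_ne i k with rfl | hi
      · simp [paddedSubmatrix_apply, hk, Matrix.diagonal_apply, Pi.single_apply, eq_comm]
      · simp [paddedSubmatrix_apply, Matrix.diagonal_apply, hi]
    rw [hrow, Matrix.det_updateRow_add, Matrix.det_updateRow_smul,
      paddedSubmatrix_updateRow_single]
    congr 2
    exact Matrix.updateRow_eq_self _ k
  · rw [add_zero]
    congr 1
    ext i j
    by_cases hi : i ∈ S
    · simp [paddedSubmatrix_apply, hi, Matrix.diagonal_apply, ne_of_mem_of_not_mem hi hk]
    · simp [paddedSubmatrix_apply, hi]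

/-- A P-matrix: all principal minors are positive. Symmetry is not assumed. -/
def IsPMatrix [LinearOrder R] (A : Matrix ι ι R) : Prop :=
  ∀ S : Finset ι, 0 < principalMinor A S

theorem isPMatrix_paddedSubmatrix [Finite ι] [LinearOrder R] {A : Matrix ι ι R} (hA : IsPMatrix A)
    (S : Finset ι) : IsPMatrix (paddedSubmatrix A S) := by
  cases nonempty_fintype ι
  intro T
  have hinter : paddedSubmatrix (paddedSubmatrix A S) T = paddedSubmatrix A (T ∩ S) := by
    ext i j
    simp only [paddedSubmatrix_apply, Finset.mem_inter, ite_and]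
  rw [← det_paddedSubmatrix, hinter, det_paddedSubmatrix]
  exact hA _

namespace IsPMatrix

theorem add_diagonal [Finite ι] [LinearOrder R] [IsStrictOrderedRing R] {A : Matrix ι ι R}
    (hA : IsPMatrix A) {D : ι → R} (hD : ∀ i, 0 ≤ D i) :
    IsPMatrix (A + Matrix.diagonal D) := by
  cases nonempty_fintype ι
  suffices h : ∀ T : Finset ι, IsPMatrix (A + Matrix.diagonal (∑ k ∈ T, Pi.single k (D k))) by
    simpa [Finset.univ_sum_single] using h Finset.univ
  intro T
  induction T using Finset.induction_on with
  | empty => simpa using hA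
  | insert k T hk ih =>
    intro S
    have hsplit : A + Matrix.diagonal (∑ j ∈ insert k T, Pi.single j (D j)) =
        A + Matrix.diagonal (∑ j ∈ T, Pi.single j (D j)) + Matrix.diagonal (Pi.single k (D k)) := by
      rw [Finset.sum_insert hk, add_comm (Pi.single k (D k) : ι → R), add_assoc,
        Matrix.diagonal_add]
      rfl
    rw [hsplit, principalMinor_add_diagonal_single]
    refine add_pos_of_pos_of_nonneg (ih S) ?_
    split_ifs
    exacts [mul_nonneg (hD k) (ih _).le, le_rfl]

variable [Fintype ι]

/-- The Fiedler–Pták theorem. If `x` were a counterexample, adding `-(A x)ᵢ / xᵢ ≥ 0` to the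
diagonal of `A` (that is, `0` where `xᵢ = 0`) would give a P-matrix whose product with `x` vanishes
on the support of `x`. -/
theorem exists_pos_mul_mulVec {𝕜 : Type*} [Field 𝕜] [LinearOrder 𝕜] [IsStrictOrderedRing 𝕜]
    {A : Matrix ι ι 𝕜} (hA : IsPMatrix A) {x : ι → 𝕜} (hx : x ≠ 0) :
    ∃ i, 0 < x i * (A *ᵥ x) i := by
  by_contra! hrev
  refine hx ?_
  have hD : ∀ i, 0 ≤ -(A *ᵥ x) i / x i := fun i => by
    have := div_nonneg (neg_nonneg.2 (hrev i)) (sq_nonneg (x i))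
    rcases eq_or_ne (x i) 0 with hi | hi
    · simp [hi]
    · convert this using 1; field_simp
  refine eq_zero_of_principalMinor_ne_zero (S := {i | x i ≠ 0}) (hA.add_diagonal hD _).ne'
    (by simp) fun i hi => ?_
  have hxi : x i ≠ 0 := by simpa using hi
  simp [Matrix.add_mulVec, Matrix.mulVec_diagonal, hxi]

theorem exists_pos_mul_sq_norm_le {A : Matrix ι ι ℝ} (hA : IsPMatrix A) :
    ∃ c > 0, ∀ x : ι → ℝ, c * ‖x‖ ^ 2 ≤ ∑ i, max (x i * (A *ᵥ x) i) 0 := by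
  set φ : (ι → ℝ) → ℝ := fun x => ∑ i, max (x i * (A *ᵥ x) i) 0 with hφ
  have hφ_cont : Continuous φ := by
    simp only [hφ]; fun_prop
  have hφ_pos : ∀ x ∈ Metric.sphere (0 : ι → ℝ) 1, 0 < φ x := fun x hx => by
    obtain ⟨i, hi⟩ := hA.exists_pos_mul_mulVec (ne_zero_of_mem_unit_sphere ⟨x, hx⟩)
    exact Finset.sum_pos' (fun _ _ => le_max_right _ _) ⟨i, Finset.mem_univ i, lt_max_of_lt_left hi⟩
  have hφ_smul : ∀ (r : ℝ) (x : ι → ℝ), φ (r • x) = r ^ 2 * φ x := fun r x => by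
    simp only [hφ, Finset.mul_sum, Matrix.mulVec_smul, Pi.smul_apply, smul_eq_mul]
    refine Finset.sum_congr rfl fun i _ => ?_
    rw [mul_max_of_nonneg _ _ (sq_nonneg r), mul_zero]
    congr 1
    ring
  obtain ⟨c, hc, hcφ⟩ : ∃ c > 0, ∀ x ∈ Metric.sphere (0 : ι → ℝ) 1, c ≤ φ x :=
    (isCompact_sphere _ _).exists_forall_le' hφ_cont.continuousOn hφ_pos
  refine ⟨c, hc, fun x => ?_⟩
  rcases eq_or_ne x 0 with rfl | hx
  · simp
  have hunit : ‖x‖⁻¹ • x ∈ Metric.sphere (0 : ι → ℝ) 1 := by simp [norm_smul, hx]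
  calc c * ‖x‖ ^ 2 ≤ φ (‖x‖⁻¹ • x) * ‖x‖ ^ 2 := by gcongr; exact hcφ _ hunit
    _ = φ x := by rw [hφ_smul]; field_simp

end IsPMatrix

end PMatrix

/-! ### The polytope of a linear complementarity system -/

section Polytope

variable {ι R 𝕜 : Type*} [Fintype ι] [CommRing R] [LinearOrder R]
  [Field 𝕜] [LinearOrder 𝕜] [IsStrictOrderedRing 𝕜]

/-- The solution set `P` of the inequalities `u_i ≥ 0` and `f_i(u) = m_i - (A u)_i ≥ 0`. -/
def polytope (A : Matrix ι ι R) (m : ι → R) : Set (ι → R) :=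
  {u | ∀ i, 0 ≤ u i ∧ (A *ᵥ u) i ≤ m i}

theorem convex_polytope [IsOrderedRing R] (A : Matrix ι ι R) (m : ι → R) :
    Convex R (polytope A m) := by
  have hinter : polytope A m = Set.Ici 0 ∩ A.mulVecLin ⁻¹' Set.Iic m := by
    ext u
    simp [polytope, Pi.le_def, forall_and]
  rw [hinter]
  exact (convex_Ici (𝕜 := R) 0).inter ((convex_Iic m).linear_preimage _)

theorem mem_extremePoints_polytope_iff {A : Matrix ι ι 𝕜} {m u : ι → 𝕜} :
    u ∈ (polytope A m).extremePoints 𝕜 ↔ u ∈ polytope A m ∧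
      ∀ d, (∀ i, u i = 0 → d i = 0) → (∀ i, (A *ᵥ u) i = m i → (A *ᵥ d) i = 0) → d = 0 := by
  let L : ι ⊕ ι → (ι → 𝕜) →ₗ[𝕜] 𝕜 :=
    Sum.elim (fun i => -LinearMap.proj i) fun i => LinearMap.proj i ∘ₗ A.mulVecLin
  have hP : polytope A m = {u | ∀ k, L k u ≤ Sum.elim (0 : ι → 𝕜) m k} := by
    ext u
    simp [polytope, L, forall_and]
  rw [hP, mem_extremePoints_setOf_forall_le_iff]
  simp [L, and_imp]

theorem IsPMatrix.isCompact_polytope [DecidableEq ι] {A : Matrix ι ι ℝ} (hA : IsPMatrix A)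
    (m : ι → ℝ) : IsCompact (polytope A m) := by
  have hclosed : IsClosed (polytope A m) := by
    simp only [polytope, Set.ofPred_forall, Set.ofPred_and]
    exact isClosed_iInter fun i => (isClosed_le (by fun_prop) (by fun_prop)).inter
      (isClosed_le (by fun_prop) (by fun_prop))
  refine Metric.isCompact_of_isClosed_isBounded hclosed ?_
  obtain ⟨c, hc, hcoer⟩ := hA.exists_pos_mul_sq_norm_le
  refine isBounded_iff_forall_norm_le.2 ⟨(∑ i, |m i|) / c, fun u hu => ?_⟩
  rcases eq_or_ne u 0 with rfl | hu0
  · rw [norm_zero]; positivity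
  have hterm : ∀ i, max (u i * (A *ᵥ u) i) 0 ≤ ‖u‖ * |m i| := fun i => by
    have hle : u i * (A *ᵥ u) i ≤ u i * |m i| :=
      mul_le_mul_of_nonneg_left ((hu i).2.trans (le_abs_self _)) (hu i).1
    have hnorm : u i ≤ ‖u‖ := (le_abs_self _).trans (norm_le_pi_norm u i)
    exact max_le (hle.trans (by gcongr)) (by positivity)
  have hlin : ‖u‖ * (c * ‖u‖) ≤ ‖u‖ * ∑ i, |m i| := calc
    ‖u‖ * (c * ‖u‖) = c * ‖u‖ ^ 2 := by ring
    _ ≤ ∑ i, max (u i * (A *ᵥ u) i) 0 := hcoer u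
    _ ≤ ‖u‖ * ∑ i, |m i| := by
      rw [Finset.mul_sum]; exact Finset.sum_le_sum fun i _ => hterm i
  rw [le_div_iff₀' hc]
  exact le_of_mul_le_mul_left hlin (norm_pos_iff.2 hu0)

variable [DecidableEq ι]

/-- The polytope `P_S` of the subsystem indexed by `S`, embedded by setting the coordinates outside
`S` to zero: there `f_i(u) ≥ 0` is replaced by `-u_i ≥ 0`. -/
def subPolytope (A : Matrix ι ι R) (m : ι → R) (S : Finset ι) : Set (ι → R) :=
  polytope (paddedSubmatrix A S) (S.piecewise m 0)

theorem mem_subPolytope_iff {A : Matrix ι ι R} {m u : ι → R} {S : Finset ι} :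
    u ∈ subPolytope A m S ↔ (∀ i ∉ S, u i = 0) ∧ ∀ i ∈ S, 0 ≤ u i ∧ (A *ᵥ u) i ≤ m i := by
  simp only [subPolytope, polytope, paddedSubmatrix_mulVec, Set.mem_ofPred_eq]
  refine ⟨fun h => ⟨fun i hi => ?_, fun i hi => ?_⟩, fun h i => ?_⟩
  · have hpair : 0 ≤ u i ∧ u i ≤ 0 := by simpa [hi] using h i
    exact hpair.2.antisymm hpair.1
  · simpa [hi] using h i
  · by_cases hi : i ∈ S
    · simpa [hi] using h.2 i hi
    · simp [hi, h.1 i hi]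

theorem subPolytope_univ (A : Matrix ι ι R) (m : ι → R) :
    subPolytope A m Finset.univ = polytope A m := by
  ext u
  simp [mem_subPolytope_iff, polytope]

theorem mem_subPolytope_erase {A : Matrix ι ι R} {m u : ι → R} {S : Finset ι}
    (hu : u ∈ subPolytope A m S) {i : ι} (hi : u i = 0) : u ∈ subPolytope A m (S.erase i) := by
  rw [mem_subPolytope_iff] at hu ⊢
  refine ⟨fun j hj => ?_, fun j hj => hu.2 j (Finset.mem_of_mem_erase hj)⟩
  rcases eq_or_ne j i with rfl | hji
  · exact hi
  · exact hu.1 j fun hjS => hj (Finset.mem_erase.2 ⟨hji, hjS⟩)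

/-- Otherwise, with `T` the support of `u`, a solution `d` supported in `T` of `(A d)_i = 1` and
`(A d)_j = 0` for `j ∈ T \ {i}` vanishes on all tight constraints. -/
theorem IsPMatrix.mulVec_eq_of_mem_extremePoints {A : Matrix ι ι 𝕜} {m u : ι → 𝕜}
    (hA : IsPMatrix A) {S : Finset ι} (hu : u ∈ (subPolytope A m S).extremePoints 𝕜)
    (hnd : ∀ i ∈ S, u i = 0 → (A *ᵥ u) i ≠ m i) {i : ι} (hi : u i ≠ 0) : (A *ᵥ u) i = m i := by
  by_contra hslack
  set T : Finset ι := {j | u j ≠ 0} with hT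
  obtain ⟨d, hd⟩ : ∃ d, paddedSubmatrix A T *ᵥ d = Pi.single i 1 := by
    refine Matrix.mulVec_surjective_iff_isUnit.2 ((Matrix.isUnit_iff_isUnit_det _).2 ?_) _
    rw [det_paddedSubmatrix]
    exact (hA T).ne'.isUnit
  have hd_off : ∀ j, u j = 0 → d j = 0 := fun j hj => by
    have hji : j ≠ i := by rintro rfl; exact hi hj
    simpa [paddedSubmatrix_mulVec, hT, hj, hji] using congrFun hd j
  have hAd : ∀ j, u j ≠ 0 → j ≠ i → (A *ᵥ d) j = 0 := fun j hj hji => by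
    simpa [paddedSubmatrix_mulVec, hT, hj, hji] using congrFun hd j
  have hd_zero : d = 0 := by
    refine (mem_extremePoints_polytope_iff.1 hu).2 d hd_off fun j hj => ?_
    by_cases hjS : j ∈ S
    · simp only [paddedSubmatrix_mulVec, hjS, Finset.piecewise_eq_of_mem] at hj ⊢
      exact hAd j (fun h => hnd j hjS h hj) (by rintro rfl; exact hslack hj)
    · simp only [paddedSubmatrix_mulVec, hjS, not_false_eq_true, Finset.piecewise_eq_of_notMem,
        Pi.zero_apply] at hj ⊢
      exact hd_off j hj
  simpa [hd_zero] using congrFun hd i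

end Polytope

/-! ### Basic points -/

section BasicPoint

variable {ι R : Type*} [Fintype ι] [CommRing R] {A : Matrix ι ι R} {m u v : ι → R} {I : Finset ι}

/-- The equations `u_i = 0` for `i ∈ I` and `f_j(u) = 0` for `j ∉ I` defining the point `u_I`. -/
def IsBasicPoint (A : Matrix ι ι R) (m : ι → R) (I : Finset ι) (u : ι → R) : Prop :=
  (∀ i ∈ I, u i = 0) ∧ ∀ j ∉ I, (A *ᵥ u) j = m j

theorem isBasicPoint_filter_eq_zero_iff [DecidableEq R] :
    IsBasicPoint A m {i | u i = 0} u ↔ ∀ i, u i ≠ 0 → (A *ᵥ u) i = m i := by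
  simp [IsBasicPoint]

namespace IsBasicPoint

variable [DecidableEq ι] [LinearOrder R] [IsStrictOrderedRing R]

theorem eq (hA : IsPMatrix A) (hu : IsBasicPoint A m I u) (hv : IsBasicPoint A m I v) : u = v := by
  refine sub_eq_zero.1
    (eq_zero_of_principalMinor_ne_zero (hA Iᶜ).ne' (fun i hi => ?_) fun i hi => ?_)
  · rw [Finset.mem_compl, not_not] at hi
    rw [Pi.sub_apply, hu.1 i hi, hv.1 i hi, sub_zero]
  · rw [Finset.mem_compl] at hi
    rw [Matrix.mulVec_sub, Pi.sub_apply, hu.2 i hi, hv.2 i hi, sub_self]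

theorem mulVec_lt (hA : IsPMatrix A) (hm : ∀ J, ∀ k ∉ J, 0 < borderedMinor A m J k)
    (hu : IsBasicPoint A m I u) {i : ι} (hi : i ∈ I) : (A *ᵥ u) i < m i := by
  have hiJ : i ∉ Iᶜ := by simpa using hi
  have hpos := hm Iᶜ i hiJ
  rw [borderedMinor_eq_add (u := u) hiJ (fun j hj => hu.1 j (by simp_all))
    (fun j hj => hu.2 j (by simpa using hj)), hu.1 i hi, zero_mul, zero_add] at hpos
  exact sub_pos.1 (pos_of_mul_pos_left hpos (hA _).le)

theorem pos (hA : IsPMatrix A) (hm : ∀ J, ∀ k ∉ J, 0 < borderedMinor A m J k)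
    (hu : IsBasicPoint A m I u) {i : ι} (hi : i ∉ I) : 0 < u i := by
  have hiJ : i ∉ Iᶜ.erase i := Finset.notMem_erase _ _
  have hins : insert i (Iᶜ.erase i) = Iᶜ := Finset.insert_erase (by simpa using hi)
  have hpos := hm _ i hiJ
  rw [borderedMinor_eq_add (u := u) hiJ (fun j hj => hu.1 j (by simpa [hins] using hj))
    (fun j hj => hu.2 j (by simp_all)), hu.2 i hi, sub_self, zero_mul, add_zero] at hpos
  exact pos_of_mul_pos_left hpos (hA _).le

theorem mem_extremePoints_polytope {𝕜 : Type*} [Field 𝕜] [LinearOrder 𝕜] [IsStrictOrderedRing 𝕜]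
    {A : Matrix ι ι 𝕜} {m u : ι → 𝕜} {I : Finset ι} (hA : IsPMatrix A)
    (hm : ∀ J, ∀ k ∉ J, 0 < borderedMinor A m J k) (hu : IsBasicPoint A m I u) :
    u ∈ (polytope A m).extremePoints 𝕜 := by
  refine mem_extremePoints_polytope_iff.2 ⟨fun i => ?_, fun d hd hAd => ?_⟩
  · by_cases hi : i ∈ I
    · exact ⟨(hu.1 i hi).ge, (hu.mulVec_lt hA hm hi).le⟩
    · exact ⟨(hu.pos hA hm hi).le, (hu.2 i hi).le⟩
  · exact eq_zero_of_principalMinor_ne_zero (hA Iᶜ).ne'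
      (fun i hi => hd i (hu.1 i (by simpa using hi))) fun i hi => hAd i (hu.2 i (by simpa using hi))

end IsBasicPoint

end BasicPoint

section Nondegenerate

variable {ι : Type*} [Fintype ι] [DecidableEq ι] {A : Matrix ι ι ℝ} {m u : ι → ℝ}

theorem mulVec_lt_of_mem_subPolytope (hA : IsPMatrix A)
    (hm : ∀ J, ∀ k ∉ J, 0 < borderedMinor A m J k) {S : Finset ι} (hu : u ∈ subPolytope A m S)
    {i : ι} (hi : i ∉ S) : (A *ᵥ u) i < m i := by
  induction S using Finset.strongInduction generalizing u i with
  | H S ih =>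
  let l : StrongDual ℝ (ι → ℝ) := (LinearMap.proj i ∘ₗ A.mulVecLin).toContinuousLinearMap
  have hcompact : IsCompact (subPolytope A m S) :=
    (isPMatrix_paddedSubmatrix hA S).isCompact_polytope _
  obtain ⟨w, hw, hmax⟩ := exists_mem_extremePoints_forall_le hcompact ⟨u, hu⟩ l
  have hwP : w ∈ subPolytope A m S := extremePoints_subset hw
  have hnd : ∀ j ∈ S, w j = 0 → (A *ᵥ w) j ≠ m j := fun j hj hwj =>
    (ih _ (Finset.erase_ssubset hj) (mem_subPolytope_erase hwP hwj) (Finset.notMem_erase j S)).ne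
  have hbasic : IsBasicPoint A m {j | w j = 0} w := isBasicPoint_filter_eq_zero_iff.2
    fun j => hA.mulVec_eq_of_mem_extremePoints hw hnd
  have hwi : i ∈ ({j | w j = 0} : Finset ι) := by
    simpa using (mem_subPolytope_iff.1 hwP).1 i hi
  exact (hmax u hu).trans_lt (hbasic.mulVec_lt hA hm hwi)

theorem isBasicPoint_of_mem_extremePoints_polytope (hA : IsPMatrix A)
    (hm : ∀ J, ∀ k ∉ J, 0 < borderedMinor A m J k) (hu : u ∈ (polytope A m).extremePoints ℝ) :
    IsBasicPoint A m {i | u i = 0} u := by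
  rw [← subPolytope_univ] at hu
  refine isBasicPoint_filter_eq_zero_iff.2 fun i => hA.mulVec_eq_of_mem_extremePoints hu ?_
  exact fun j _ huj => (mulVec_lt_of_mem_subPolytope hA hm
    (mem_subPolytope_erase (extremePoints_subset hu) huj) (Finset.notMem_erase j _)).ne

theorem polytope_compact_convex_extremePoints_general (hA : IsPMatrix A)
    (hm : ∀ J, ∀ k ∉ J, 0 < borderedMinor A m J k) {uI : Finset ι → ι → ℝ}
    (huI : ∀ I, IsBasicPoint A m I (uI I)) :
    IsCompact (polytope A m) ∧ Convex ℝ (polytope A m) ∧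
      (polytope A m).extremePoints ℝ = Set.range uI := by
  refine ⟨hA.isCompact_polytope m, convex_polytope A m, Set.Subset.antisymm (fun u hu => ?_) ?_⟩
  · exact ⟨_, (huI _).eq hA (isBasicPoint_of_mem_extremePoints_polytope hA hm hu)⟩
  · rintro _ ⟨I, rfl⟩
    exact (huI I).mem_extremePoints_polytope hA hm

end Nondegenerate

/-! ### Admissible pairs -/

section Admissible

variable {N : ℕ} {A : Matrix (Fin N) (Fin N) ℝ} {m : Fin N → ℝ}

theorem minorM_eq_borderedMinor {J : Finset (Fin N)} {k : Fin N} (hk : k ∉ J) :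
    minorM A m J k = borderedMinor A m J k := by
  unfold minorM borderedMinor principalMinor
  rw [← Matrix.det_submatrix_equiv_self (Finset.subtypeInsertEquivOption hk).symm]
  have hne : ∀ l : J, (l : Fin N) ≠ k := fun l => ne_of_mem_of_not_mem l.2 hk
  congr 1
  ext (_ | a) (_ | b) <;> simp [Finset.subtypeInsertEquivOption, hne]

theorem IsAdmissible.isPMatrix {κ : ℝ} (hκ : 0 < κ) (h : IsAdmissible κ A m) : IsPMatrix A :=
  fun S => hκ.trans_le (h.2.2.1 S)

theorem IsAdmissible.borderedMinor_pos {κ : ℝ} (hκ : 0 < κ) (h : IsAdmissible κ A m)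
    (J : Finset (Fin N)) (k : Fin N) (hk : k ∉ J) : 0 < borderedMinor A m J k :=
  minorM_eq_borderedMinor (A := A) hk ▸ hκ.trans_le (h.2.2.2 J k hk)

theorem fComp_eq_sub (A : Matrix (Fin N) (Fin N) ℝ) (m u : Fin N → ℝ) (i : Fin N) :
    fComp A m u i = m i - (A *ᵥ u) i :=
  rfl

theorem setOf_nonneg_fComp_eq_polytope (A : Matrix (Fin N) (Fin N) ℝ) (m : Fin N → ℝ) :
    {u : Fin N → ℝ | ∀ i, 0 ≤ u i ∧ 0 ≤ fComp A m u i} = polytope A m := by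
  simp only [polytope, fComp_eq_sub, sub_nonneg]

theorem isBasicPoint_iff_fComp {I : Finset (Fin N)} {u : Fin N → ℝ} :
    IsBasicPoint A m I u ↔ (∀ i ∈ I, u i = 0) ∧ ∀ j ∉ I, fComp A m u j = 0 := by
  simp only [IsBasicPoint, fComp_eq_sub, sub_eq_zero, eq_comm]

end Admissible

/-- For an admissible pair `(A, m)`, the solution set
`P = {u : u_i ≥ 0 and f_i(u) ≥ 0 for all i}` is a compact convex set whose set of extreme
points is exactly `{u_I : I ⊆ {1,…,N}}`, where `u_I` solves `u_i = 0 (i ∈ I)`,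
`f_j(u) = 0 (j ∉ I)`. -/
theorem polytope_compact_convex_extremePoints {N : ℕ} (hN : 0 < N) (κ : ℝ) (hκ : 0 < κ)
    (A : Matrix (Fin N) (Fin N) ℝ) (m : Fin N → ℝ) (hAm : IsAdmissible κ A m)
    (uI : Finset (Fin N) → Fin N → ℝ)
    (huI : ∀ I : Finset (Fin N), (∀ i ∈ I, uI I i = 0) ∧ ∀ j ∉ I, fComp A m (uI I) j = 0) :
    IsCompact {u : Fin N → ℝ | ∀ i, 0 ≤ u i ∧ 0 ≤ fComp A m u i} ∧
    Convex ℝ {u : Fin N → ℝ | ∀ i, 0 ≤ u i ∧ 0 ≤ fComp A m u i} ∧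
    Set.extremePoints ℝ {u : Fin N → ℝ | ∀ i, 0 ≤ u i ∧ 0 ≤ fComp A m u i} =
      {u : Fin N → ℝ | ∃ I : Finset (Fin N), u = uI I} := by
  rw [setOf_nonneg_fComp_eq_polytope]
  simpa only [Set.range, eq_comm] using polytope_compact_convex_extremePoints_general
    (hAm.isPMatrix hκ) (hAm.borderedMinor_pos hκ) fun I => isBasicPoint_iff_fComp.2 (huI I)
end

section
/- There exists σ > 0, depending only on N and κ, such that for every admissible pair (A, m) with constant κ, every index j ∈ {1,…,N}, and every u = (u_1,…,u_N) ∈ ℝ^N with u ≥ 0, u_j ≤ σ and f_j(u) ≤ σ, one has min_{1 ≤ i ≤ N} f_i(u) ≤ −σ. -/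
open MeasureTheory Filter

/-!
Suppose that `f i (u) > -σ` for every `i` and put `w = f (u) + σ • 1 > 0`, `t = u + w`. Writing
`u k = p k * t k` with `0 ≤ p k ≤ 1`, the definition of `f` becomes the linear system
`P *ᵥ t = m + σ • 1`, where the `k`-th column of `P` is `(1 - p k) e_k + p k A_k`. Cramer's rule at
the index `j` expresses `t j * det P` as the sum of `det (P.updateCol j m)` and `σ` times a
determinant with bounded entries. By multilinearity in the columns, `det (P.updateCol j m)` is a
convex combination of its values at `p ∈ {0, 1}ⁿ`, and these are exactly the bordered minors
`Δ_{I,j}`, so it is at least `κ`. Hence `t j + σ` is bounded below by a multiple of `κ`, which is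
impossible when `u j` and `f j (u)` are both at most a small `σ`.
-/

open Matrix Set

section Multilinear

variable {R ι F : Type*} {E : ι → Type*} [DecidableEq ι] [∀ i, AddCommGroup (E i)]
  [AddCommGroup F]

lemma multilinearMap_apply_convexComb [Fintype ι] [CommRing R] [∀ i, Module R (E i)]
    [Module R F] (f : MultilinearMap R E F) (v w : ∀ i, E i) (p : ι → R) :
    f (fun i => (1 - p i) • v i + p i • w i) =
      ∑ s : Finset ι, (∏ i, s.piecewise p (1 - p) i) • f (s.piecewise w v) := by
  have hsplit : (fun i => (1 - p i) • v i + p i • w i) =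
      (fun i => p i • w i) + fun i => (1 - p i) • v i :=
    funext fun i => add_comm _ _
  rw [hsplit, f.map_add_univ]
  refine Finset.sum_congr rfl fun s _ => ?_
  rw [← f.map_smul_univ]
  congr 1
  funext i
  by_cases hi : i ∈ s <;> simp [hi]

lemma multilinearMap_apply_convexComb_mem_convexHull [Finite ι] [Field R] [LinearOrder R]
    [IsStrictOrderedRing R] [∀ i, Module R (E i)] [Module R F] (f : MultilinearMap R E F)
    (v w : ∀ i, E i) {p : ι → R} (hp : p ∈ Icc 0 1) :
    f (fun i => (1 - p i) • v i + p i • w i) ∈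
      convexHull R (range fun s : Finset ι => f (s.piecewise w v)) := by
  cases nonempty_fintype ι
  rw [multilinearMap_apply_convexComb]
  refine (convex_convexHull R _).sum_mem (fun s _ => Finset.prod_nonneg fun i _ => ?_) ?_
    fun s _ => subset_convexHull R _ (mem_range_self s)
  · by_cases hi : i ∈ s
    · simpa [hi] using hp.1 i
    · simpa [hi] using hp.2 i
  · simpa using ((MultilinearMap.mkPiAlgebra R ι R).map_add_univ p (1 - p)).symm

end Multilinear

section Determinant

variable {m n R : Type*} [Fintype m] [DecidableEq m] [Fintype n] [DecidableEq n] [CommRing R]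

lemma det_submatrix_eq_det_of_col_eq_one {M : Matrix n n R} {e : m → n}
    (he : Function.Injective e)
    (hM : ∀ k ∉ range e, ∀ i, M i k = (1 : Matrix n n R) i k) :
    (M.submatrix e e).det = M.det := by
  classical
  have hcompl : M.toSquareBlockProp (· ∉ range e) = 1 := by
    ext i k
    simp [toSquareBlockProp_def, hM k k.2, one_apply, Subtype.ext_iff]
  have htriangular : ∀ i ∈ range e, ∀ k ∉ range e, M i k = 0 := fun i hi k hk => by
    rw [hM k hk, one_apply_ne (ne_of_mem_of_not_mem hi hk)]
  rw [twoBlockTriangular_det' M (· ∈ range e) htriangular, hcompl, det_one, mul_one]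
  convert! det_submatrix_equiv_self (Equiv.ofInjective e he) (M.toSquareBlockProp (· ∈ range e))

lemma det_updateCol_mulVec (M : Matrix n n R) (t : n → R) (j : n) :
    (M.updateCol j (M *ᵥ t)).det = M.det * t j := by
  rw [← cramer_apply, cramer_eq_adjugate_mulVec, mulVec_mulVec, adjugate_mul, smul_mulVec,
    one_mulVec, Pi.smul_apply, smul_eq_mul]

lemma abs_det_le [LinearOrder R] [IsStrictOrderedRing R] {M : Matrix n n R} {B : R}
    (hM : ∀ i k, |M i k| ≤ B) :
    |M.det| ≤ (Fintype.card n).factorial * B ^ Fintype.card n := by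
  simpa [nsmul_eq_mul] using det_le (abv := AbsoluteValue.abs) hM

end Determinant

section ColumnMix

variable {m n R : Type*}

/-- The columnwise interpolation between `A` and `C`: its `k`-th column is
`(1 - p k) A_k + p k C_k`. For `p = indicator I 1` it consists of the columns of `C` over `I` and
those of `A` elsewhere. It serves to write `A *ᵥ w + C *ᵥ u` with `u, w ≥ 0` as a single matrix
applied to `w + u`. -/
def columnMix [Ring R] (p : n → R) (A C : Matrix m n R) : Matrix m n R :=
  of fun i k => (1 - p k) * A i k + p k * C i k

lemma columnMix_updateCol [Ring R] [DecidableEq n] (p : n → R) (A C : Matrix m n R) (j : n)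
    (b : m → R) :
    columnMix p (A.updateCol j b) (C.updateCol j b) = (columnMix p A C).updateCol j b := by
  ext i k
  by_cases hk : k = j
  · subst hk
    simp [columnMix, ← add_mul]
  · simp [columnMix, hk]

lemma updateCol_columnMix_congr [Ring R] [DecidableEq n] {p q : n → R} {j : n}
    (hpq : ∀ k ≠ j, p k = q k) (A C : Matrix m n R) (b : m → R) :
    (columnMix p A C).updateCol j b = (columnMix q A C).updateCol j b := by
  ext i k
  by_cases hk : k = j
  · simp [hk]
  · simp [columnMix, hk, hpq k hk]

lemma abs_columnMix_le [CommRing R] [LinearOrder R] [IsStrictOrderedRing R] {p : n → R}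
    (hp : p ∈ Icc 0 1) {A C : Matrix m n R} {B : R} (hA : ∀ i k, |A i k| ≤ B)
    (hC : ∀ i k, |C i k| ≤ B) (i : m) (k : n) : |columnMix p A C i k| ≤ B :=
  abs_le.2 <| convex_Icc (-B) B (abs_le.1 (hA i k)) (abs_le.1 (hC i k))
    (sub_nonneg.2 (hp.2 k)) (hp.1 k) (sub_add_cancel 1 (p k))

lemma exists_columnMix_mulVec_add [Fintype n] [Field R] [LinearOrder R] [IsStrictOrderedRing R]
    (A C : Matrix m n R) {u w : n → R} (hu : 0 ≤ u) (hw : 0 ≤ w) :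
    ∃ p ∈ Icc (0 : n → R) 1, columnMix p A C *ᵥ (w + u) = A *ᵥ w + C *ᵥ u := by
  have hwu (k : n) : u k ≤ w k + u k := le_add_of_nonneg_left (hw k)
  refine ⟨fun k => u k / (w k + u k), ⟨fun k => ?_, fun k => ?_⟩, ?_⟩
  · exact div_nonneg (hu k) ((hu k).trans (hwu k))
  · exact div_le_one_of_le₀ (hwu k) ((hu k).trans (hwu k))
  · -- Where `w k + u k = 0`, also `u k = 0`, so the convention `0 / 0 = 0` is harmless.
    have hmul (k : n) : u k / (w k + u k) * (w k + u k) = u k :=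
      div_mul_cancel_of_imp fun h => le_antisymm (h ▸ hwu k) (hu k)
    ext i
    simp only [mulVec, dotProduct, Pi.add_apply, ← Finset.sum_add_distrib]
    refine Finset.sum_congr rfl fun k _ => ?_
    simp only [columnMix, of_apply]
    linear_combination (C i k - A i k) * hmul k

variable [Fintype n] [DecidableEq n]

lemma det_columnMix_mem_convexHull [Field R] [LinearOrder R] [IsStrictOrderedRing R]
    {p : n → R} (hp : p ∈ Icc 0 1) (A C : Matrix n n R) :
    (columnMix p A C).det ∈
      convexHull R (range fun s : Finset n => (columnMix (indicator s 1) A C).det) := by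
  have hvertex (s : Finset n) :
      (columnMix (indicator s 1) A C)ᵀ = s.piecewise Cᵀ Aᵀ := by
    ext k i
    by_cases hk : k ∈ s <;> simp [columnMix, Finset.piecewise, hk]
  simp only [← det_transpose (columnMix _ _ _), hvertex]
  exact multilinearMap_apply_convexComb_mem_convexHull detRowAlternating.toMultilinearMap Aᵀ Cᵀ hp

lemma le_det_updateCol_columnMix [Field R] [LinearOrder R] [IsStrictOrderedRing R] {κ : R}
    {A C : Matrix n n R} {j : n} {b : n → R}
    (hκ : ∀ I : Finset n, j ∉ I → κ ≤ ((columnMix (indicator I 1) A C).updateCol j b).det)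
    {p : n → R} (hp : p ∈ Icc 0 1) : κ ≤ ((columnMix p A C).updateCol j b).det := by
  rw [← columnMix_updateCol]
  refine convexHull_min ?_ (convex_Ici κ) (det_columnMix_mem_convexHull hp _ _)
  rintro _ ⟨s, rfl⟩
  have herase : ∀ k ≠ j, indicator s (1 : n → R) k = indicator (s.erase j : Finset n) 1 k :=
    fun k hk => by simp [indicator_apply, hk]
  simp only [mem_Ici, columnMix_updateCol, updateCol_columnMix_congr herase]
  exact hκ (s.erase j) (s.notMem_erase j)

lemma le_add_mul_of_add_mulVec_eq [Field R] [LinearOrder R] [IsStrictOrderedRing R] {κ B σ : R}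
    {A : Matrix n n R} {b u w : n → R} {j : n} (hB : 1 ≤ B) (hA : ∀ i k, |A i k| ≤ B)
    (hκ : ∀ I : Finset n, j ∉ I → κ ≤ ((columnMix (indicator I 1) 1 A).updateCol j b).det)
    (hσ : 0 ≤ σ) (hu : 0 ≤ u) (hw : 0 ≤ w) (h : w + A *ᵥ u = b + σ • 1) :
    κ ≤ (w j + u j + σ) * ((Fintype.card n).factorial * B ^ Fintype.card n) := by
  obtain ⟨p, hp, hpt⟩ := exists_columnMix_mulVec_add 1 A hu hw
  rw [one_mulVec] at hpt
  set P := columnMix p 1 A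
  set D : R := (Fintype.card n).factorial * B ^ Fintype.card n
  have hone (i k : n) : |(1 : Matrix n n R) i k| ≤ B := by
    by_cases hik : i = k <;> simp [one_apply, hik, hB, zero_le_one.trans hB]
  have hP (i k : n) : |P i k| ≤ B := abs_columnMix_le hp hone hA i k
  have hPj (i k : n) : |P.updateCol j 1 i k| ≤ B := by
    by_cases hk : k = j
    · simpa [hk] using hB
    · simpa [hk] using hP i k
  have hcramer : P.det * (w j + u j) = (P.updateCol j b).det + σ * (P.updateCol j 1).det := by
    rw [← det_updateCol_smul, ← det_updateCol_add, ← h, ← hpt, det_updateCol_mulVec, Pi.add_apply]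
  calc κ ≤ (P.updateCol j b).det := le_det_updateCol_columnMix hκ hp
    _ = P.det * (w j + u j) - σ * (P.updateCol j 1).det := eq_sub_of_add_eq hcramer.symm
    _ ≤ D * (w j + u j) - σ * -D := by
      gcongr
      · exact add_nonneg (hw j) (hu j)
      · exact (abs_le.1 (abs_det_le hP)).2
      · exact (abs_le.1 (abs_det_le hPj)).1
    _ = (w j + u j + σ) * D := by ring

end ColumnMix

lemma minorM_eq_det_updateCol_columnMix {N : ℕ} (A : Matrix (Fin N) (Fin N) ℝ) (m : Fin N → ℝ)
    {I : Finset (Fin N)} {j : Fin N} (hj : j ∉ I) :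
    minorM A m I j = ((columnMix (indicator I 1) 1 A).updateCol j m).det := by
  let e : Option I → Fin N := fun k => k.elim j Subtype.val
  have he : Function.Injective e :=
    Option.injective_iff.2 ⟨Subtype.val_injective, by simpa [e] using hj⟩
  have hrange (k : Fin N) (hk : k ∉ range e) : k ≠ j ∧ k ∉ I :=
    ⟨fun h => hk ⟨none, h.symm⟩, fun h => hk ⟨some ⟨k, h⟩, rfl⟩⟩
  have hne (k : I) : (k : Fin N) ≠ j := ne_of_mem_of_not_mem k.2 hj
  rw [← det_submatrix_eq_det_of_col_eq_one he fun k hk i => by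
    simp [columnMix, (hrange k hk).1, (hrange k hk).2]]
  refine congrArg det ?_
  ext (_ | i) (_ | k) <;> simp [e, columnMix, hne]

theorem exists_sigma_min_f_le_neg_sigma_general {N : ℕ} {κ : ℝ} (hκ : 0 < κ) (B : ℝ) :
    ∃ σ : ℝ, 0 < σ ∧
      ∀ (A : Matrix (Fin N) (Fin N) ℝ) (m : Fin N → ℝ), (∀ i j, |A i j| ≤ B) →
        (∀ I : Finset (Fin N), ∀ j ∉ I, κ ≤ minorM A m I j) →
        ∀ (j : Fin N) (u : Fin N → ℝ), (∀ i, 0 ≤ u i) → u j ≤ σ → fComp A m u j ≤ σ →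
          ∃ i, fComp A m u i ≤ -σ := by
  set D : ℝ := N.factorial * max 1 B ^ N
  have hD : 0 < D := by positivity
  set σ : ℝ := κ / (5 * D)
  have hσ : 0 < σ := by positivity
  refine ⟨σ, hσ, fun A m hA hM j u hu huj hfj => ?_⟩
  by_contra! hf
  let w : Fin N → ℝ := fun i => fComp A m u i + σ
  have hw : 0 ≤ w := fun i => (neg_lt_iff_pos_add.1 (hf i)).le
  have hsystem : w + A *ᵥ u = m + σ • 1 := by
    ext i
    simp only [w, fComp, mulVec, dotProduct, Pi.add_apply, Pi.smul_apply, Pi.one_apply,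
      smul_eq_mul]
    ring
  have hlower : κ ≤ (w j + u j + σ) * D := by
    simpa [D] using le_add_mul_of_add_mulVec_eq (le_max_left 1 B)
      (fun i k => (hA i k).trans (le_max_right 1 B))
      (fun I hj => minorM_eq_det_updateCol_columnMix A m hj ▸ hM I j hj) hσ.le hu hw hsystem
  have hupper : w j + u j + σ < 5 * σ := by linarith [show w j = fComp A m u j + σ from rfl]
  have hκD : 5 * σ * D = κ := by simp only [σ]; field_simp
  exact (hlower.trans_lt (mul_lt_mul_of_pos_right hupper hD)).ne' hκD

/-- There is `σ > 0`, depending only on `N` and `κ`, such that for every admissible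
pair `(A, m)` with constant `κ`, every index `j`, and every nonnegative `u` with `u j ≤ σ`
and `f_j(u) ≤ σ`, one has `min_i f_i(u) ≤ -σ`. -/
theorem exists_sigma_min_f_le_neg_sigma {N : ℕ} (hN : 0 < N) (κ : ℝ) (hκ : 0 < κ) :
    ∃ σ : ℝ, 0 < σ ∧
      ∀ (A : Matrix (Fin N) (Fin N) ℝ) (m : Fin N → ℝ), IsAdmissible κ A m →
        ∀ (j : Fin N) (u : Fin N → ℝ), (∀ i, 0 ≤ u i) → u j ≤ σ → fComp A m u j ≤ σ →
          ∃ i, fComp A m u i ≤ -σ := by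
  obtain ⟨σ, hσ, h⟩ := exists_sigma_min_f_le_neg_sigma_general (N := N) hκ (1 / κ)
  exact ⟨σ, hσ, fun A m hAm => h A m hAm.1 hAm.2.2.2⟩
end

section
/- For every C > 0 there exists R > 0, depending only on C, N, p and κ, such that for every admissible pair (A, m) with constant κ and every u ∈ ℝ^N with u ≥ 0 and |u| ≥ R, one has g(u) ≠ 0 and Σ_{i=1}^N u_i |f_i(u)|^p ≥ C g(u). In other words, v(u) → ∞ as |u| → ∞ over nonnegative u, uniformly with respect to admissible coefficients. -/
/-!
Write `f = m - A u`, let `‖·‖` be the sup norm on vectors indexed by `n` coordinates, and suppose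
`∑ i, u i * |f i| ^ p ≤ C * ∑ i, |f i| ^ p`; the task is to bound `‖u‖` (this also covers `g ≠ 0`,
since `g = 0` makes the inequality trivial). Then `u i * |f i| ^ p ≤ C n ‖f‖ ^ p` for each `i`, so
`|f i|` is at most `δ ‖f‖` on the set `J` where `u i ≥ K = C n / δ ^ p`. On `J`, the vector `u`
therefore solves a linear system with matrix `A_JJ` whose right-hand side is bounded by a constant
plus `δ ‖f‖`. The lower bound on the principal minor `Δ_J` bounds `A_JJ⁻¹` uniformly, and `‖f‖`
grows at most linearly in `‖u‖`, so for `δ` small the term `δ ‖f‖` is absorbed into the left-hand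
side.
-/

open MeasureTheory Filter

/-- The submatrix of `A` with rows and columns in `J`, whose determinant is the principal minor
`Δ_J`; it is indexed by the subtype `J`, so that no reindexing by `Fin` is needed. -/
def principalSubmatrix {ι R : Type*} (A : Matrix ι ι R) (J : Finset ι) : Matrix J J R :=
  A.submatrix (↑) (↑)

section LinearSystems

open Finset Matrix

variable {ι R : Type*} [NonUnitalSeminormedRing R]

lemma norm_sum_mul_le {s : Finset ι} {a x : ι → R} {M b : ℝ} (ha : ∀ j ∈ s, ‖a j‖ ≤ M)
    (hx : ∀ j ∈ s, ‖x j‖ ≤ b) :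
    ‖∑ j ∈ s, a j * x j‖ ≤ #s * (M * b) := by
  rw [← nsmul_eq_mul, ← sum_const]
  exact norm_sum_le_of_le s fun j hj ↦ norm_mul_le_of_le (ha j hj) (hx j hj)

variable [Fintype ι]

lemma norm_sub_mulVec_le {l : Type*} [Fintype l] {A : Matrix l ι R} {m : l → R} {M b : ℝ}
    (hM : 0 ≤ M) (hb : 0 ≤ b) (hA : ∀ i j, ‖A i j‖ ≤ M) (hm : ∀ i, ‖m i‖ ≤ b) (u : ι → R) :
    ‖m - A *ᵥ u‖ ≤ b + Fintype.card ι * (M * ‖u‖) :=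
  (pi_norm_le_iff_of_nonneg (by positivity)).2 fun i ↦ norm_sub_le_of_le (hm i) <|
    norm_sum_mul_le (fun j _ ↦ hA i j) fun j _ ↦ norm_le_pi_norm u j

lemma principalSubmatrix_mulVec_restrict {S : Type*} [DecidableEq ι] [NonUnitalNonAssocRing S]
    (A : Matrix ι ι S) (u : ι → S) (J : Finset ι) (i : J) :
    (principalSubmatrix A J *ᵥ fun j : J ↦ u j) i = (A *ᵥ u) i - ∑ j ∈ Jᶜ, A i j * u j := by
  rw [eq_sub_iff_add_eq]
  simp only [mulVec, dotProduct, principalSubmatrix, submatrix_apply]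
  rw [sum_coe_sort J fun j ↦ A i j * u j, sum_add_sum_compl]

lemma norm_principalSubmatrix_mulVec_le {A : Matrix ι ι R} {m u : ι → R} {M b K ε : ℝ}
    {J : Finset ι} (hJ : J.Nonempty) (hA : ∀ i j, ‖A i j‖ ≤ M) (hm : ∀ i, ‖m i‖ ≤ b)
    (hres : ∀ i ∈ J, ‖(m - A *ᵥ u) i‖ ≤ ε) (hK : 0 ≤ K) (hu : ∀ i ∉ J, ‖u i‖ ≤ K) :
    ‖principalSubmatrix A J *ᵥ fun j : J ↦ u j‖ ≤ b + ε + Fintype.card ι * (M * K) := by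
  classical
  have : Nonempty J := hJ.to_subtype
  refine (pi_norm_le_iff_of_nonempty _).2 fun i ↦ ?_
  have hM : 0 ≤ M := (norm_nonneg _).trans (hA i i)
  have hcompl : ‖∑ j ∈ Jᶜ, A i j * u j‖ ≤ Fintype.card ι * (M * K) := calc
    _ ≤ #Jᶜ * (M * K) := norm_sum_mul_le (fun j _ ↦ hA i j) fun j hj ↦ hu j (mem_compl.1 hj)
    _ ≤ Fintype.card ι * (M * K) := by gcongr; exact card_le_univ _
  have hrow : (A *ᵥ u) i = m i - (m - A *ᵥ u) i := by simp
  rw [principalSubmatrix_mulVec_restrict, hrow]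
  exact norm_sub_le_of_le (norm_sub_le_of_le (hm i) (hres i i.2)) hcompl

lemma norm_le_max_of_norm_sub_mulVec_le {A : Matrix ι ι R} {m u : ι → R} {M b K L ε : ℝ}
    (hK : 0 ≤ K) (hL : 0 ≤ L) (hA : ∀ i j, ‖A i j‖ ≤ M) (hm : ∀ i, ‖m i‖ ≤ b)
    (hinv : ∀ (J : Finset ι) (x : J → R), ‖x‖ ≤ L * ‖principalSubmatrix A J *ᵥ x‖)
    (hres : ∀ i, K ≤ ‖u i‖ → ‖(m - A *ᵥ u) i‖ ≤ ε) :
    ‖u‖ ≤ max K (L * (b + ε + Fintype.card ι * (M * K))) := by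
  refine (pi_norm_le_iff_of_nonneg (le_max_of_le_left hK)).2 fun i ↦ ?_
  obtain hi | hi := lt_or_ge ‖u i‖ K
  · exact le_max_of_le_left hi.le
  refine le_max_of_le_right ?_
  let J : Finset ι := {j | K ≤ ‖u j‖}
  have mem_J (j : ι) : j ∈ J ↔ K ≤ ‖u j‖ := by simp [J]
  have hiJ : i ∈ J := (mem_J i).2 hi
  calc ‖u i‖
    _ ≤ ‖fun j : J ↦ u j‖ := norm_le_pi_norm (fun j : J ↦ u j) ⟨i, hiJ⟩
    _ ≤ L * ‖principalSubmatrix A J *ᵥ fun j : J ↦ u j‖ := hinv J _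
    _ ≤ L * (b + ε + Fintype.card ι * (M * K)) := by
      gcongr
      exact norm_principalSubmatrix_mulVec_le ⟨i, hiJ⟩ hA hm (fun j hj ↦ hres j ((mem_J j).1 hj))
        hK fun j hj ↦ (not_le.1 (mt (mem_J j).2 hj)).le

end LinearSystems

section Cramer

open Matrix
open scoped Nat

variable {n ι 𝕜 : Type*} [Fintype n] [DecidableEq n] [Finite ι] [DecidableEq ι] [NormedField 𝕜]

lemma abv_adjugate_apply_le {R S : Type*} [CommRing R] [Nontrivial R] [CommRing S] [LinearOrder S]
    [IsStrictOrderedRing S] {abv : AbsoluteValue R S} {A : Matrix n n R} {M : S}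
    (hA : ∀ i j, abv (A i j) ≤ M) (i j : n) :
    abv (A.adjugate i j) ≤ (Fintype.card n)! • max M 1 ^ Fintype.card n := by
  rw [adjugate_apply]
  refine det_le fun k l ↦ ?_
  rw [updateRow_apply]
  split_ifs
  · obtain rfl | hl := eq_or_ne l i
    · simp
    · simp [hl]
  · exact (hA k l).trans (le_max_left _ _)

lemma norm_det_mul_norm_le {A : Matrix n n 𝕜} {M : ℝ} (hA : ∀ i j, ‖A i j‖ ≤ M) (x : n → 𝕜) :
    ‖A.det‖ * ‖x‖ ≤
      Fintype.card n * ((Fintype.card n)! * max M 1 ^ Fintype.card n) * ‖A *ᵥ x‖ := by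
  have cramer : A.det • x = A.adjugate *ᵥ (A *ᵥ x) := by
    rw [mulVec_mulVec, adjugate_mul, smul_mulVec, one_mulVec]
  have hadj (i j : n) : ‖A.adjugate i j‖ ≤ (Fintype.card n)! * max M 1 ^ Fintype.card n := by
    rw [← nsmul_eq_mul]
    exact abv_adjugate_apply_le (abv := NormedField.toAbsoluteValue 𝕜) hA i j
  rw [← norm_smul, cramer, mul_assoc, pi_norm_le_iff_of_nonneg (by positivity)]
  exact fun i ↦ norm_sum_mul_le (fun j _ ↦ hadj i j) fun j _ ↦ norm_le_pi_norm _ j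

variable (ι 𝕜) in
lemma exists_norm_le_mul_norm_principalSubmatrix_mulVec (M : ℝ) {κ : ℝ} (hκ : 0 < κ) :
    ∃ L : ℝ, 0 ≤ L ∧ ∀ (A : Matrix ι ι 𝕜) (J : Finset ι), (∀ i j, ‖A i j‖ ≤ M) →
      κ ≤ ‖(principalSubmatrix A J).det‖ →
        ∀ x : J → 𝕜, ‖x‖ ≤ L * ‖principalSubmatrix A J *ᵥ x‖ := by
  have := Fintype.ofFinite ι
  refine ⟨Fintype.card ι * ((Fintype.card ι)! * max M 1 ^ Fintype.card ι) / κ, by positivity,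
    fun A J hA hdet x ↦ ?_⟩
  have hcard : Fintype.card J ≤ Fintype.card ι := Fintype.card_subtype_le _
  rw [div_mul_eq_mul_div, le_div_iff₀' hκ]
  calc κ * ‖x‖
    _ ≤ ‖(principalSubmatrix A J).det‖ * ‖x‖ := by gcongr
    _ ≤ Fintype.card J * ((Fintype.card J)! * max M 1 ^ Fintype.card J) *
          ‖principalSubmatrix A J *ᵥ x‖ :=
        norm_det_mul_norm_le (A := principalSubmatrix A J) (fun i j ↦ hA i j) x
    _ ≤ Fintype.card ι * ((Fintype.card ι)! * max M 1 ^ Fintype.card ι) *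
          ‖principalSubmatrix A J *ᵥ x‖ := by gcongr; exact le_max_right _ _

end Cramer

section WeightedSums

variable {ι : Type*} [Fintype ι]

lemma norm_le_mul_norm_of_sum_mul_rpow_le {E : Type*} [SeminormedAddCommGroup E] {u : ι → ℝ}
    {f : ι → E} {p C δ : ℝ} (hp : 0 < p) (hC : 0 < C) (hδ : 0 < δ) (hu : ∀ i, 0 ≤ u i)
    (hle : ∑ i, u i * ‖f i‖ ^ p ≤ C * ∑ i, ‖f i‖ ^ p) {i : ι}
    (hi : C * Fintype.card ι / δ ^ p ≤ u i) : ‖f i‖ ≤ δ * ‖f‖ := by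
  have : Nonempty ι := ⟨i⟩
  have hK : 0 < C * Fintype.card ι / δ ^ p := by positivity
  rw [← Real.rpow_le_rpow_iff (norm_nonneg _) (by positivity) hp]
  refine le_of_mul_le_mul_left ?_ hK
  calc C * Fintype.card ι / δ ^ p * ‖f i‖ ^ p
    _ ≤ u i * ‖f i‖ ^ p := by gcongr
    _ ≤ ∑ j, u j * ‖f j‖ ^ p :=
        Finset.single_le_sum (f := fun j ↦ u j * ‖f j‖ ^ p)
          (fun j _ ↦ mul_nonneg (hu j) (by positivity)) (Finset.mem_univ i)
    _ ≤ C * ∑ j, ‖f j‖ ^ p := hle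
    _ ≤ C * ∑ _j : ι, ‖f‖ ^ p := by gcongr with j; exact norm_le_pi_norm f j
    _ = C * Fintype.card ι / δ ^ p * (δ * ‖f‖) ^ p := by
        rw [Real.mul_rpow hδ.le (norm_nonneg f), Finset.sum_const, Finset.card_univ, nsmul_eq_mul]
        field_simp

lemma sqrt_sum_sq_le_sqrt_card_mul_norm (u : ι → ℝ) :
    √(∑ i, u i ^ 2) ≤ √(Fintype.card ι) * ‖u‖ := by
  rw [← Real.sqrt_sq (norm_nonneg u), ← Real.sqrt_mul (Nat.cast_nonneg _), ← nsmul_eq_mul]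
  refine Real.sqrt_le_sqrt (Finset.sum_le_card_nsmul _ _ _ fun i _ ↦ ?_)
  exact sq_le_sq.2 ((norm_le_pi_norm u i).trans (le_abs_self _))

end WeightedSums

section Uniform

open Matrix

variable {ι : Type*} [Fintype ι] [DecidableEq ι] {p κ M : ℝ}

variable (ι) in
lemma exists_norm_le_of_sum_mul_rpow_le (hp : 0 < p) (hκ : 0 < κ) (hM : 0 ≤ M) {C : ℝ}
    (hC : 0 < C) :
    ∃ T : ℝ, ∀ (A : Matrix ι ι ℝ) (m : ι → ℝ), (∀ i j, |A i j| ≤ M) → (∀ i, |m i| ≤ M) →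
      (∀ I : Finset ι, κ ≤ |(principalSubmatrix A I).det|) →
        ∀ u : ι → ℝ, (∀ i, 0 ≤ u i) →
          ∑ i, u i * |(m - A *ᵥ u) i| ^ p ≤ C * ∑ i, |(m - A *ᵥ u) i| ^ p → ‖u‖ ≤ T := by
  obtain ⟨L, hL, hinv⟩ := exists_norm_le_mul_norm_principalSubmatrix_mulVec ι ℝ M hκ
  let D := 2 * (L * (Fintype.card ι * M)) + 1
  have hD : 0 < D := by positivity
  let K := C * Fintype.card ι / D⁻¹ ^ p
  have hK : 0 ≤ K := by positivity
  refine ⟨K + 2 * L * (M + D⁻¹ * M + Fintype.card ι * (M * K)), fun A m hA hm hdet u hu hle ↦ ?_⟩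
  have hres (i : ι) (hi : K ≤ ‖u i‖) :
      ‖(m - A *ᵥ u) i‖ ≤ D⁻¹ * (M + Fintype.card ι * (M * ‖u‖)) := calc
    _ ≤ D⁻¹ * ‖m - A *ᵥ u‖ := norm_le_mul_norm_of_sum_mul_rpow_le hp hC (inv_pos.2 hD) hu hle
      (hi.trans_eq (Real.norm_of_nonneg (hu i)))
    _ ≤ D⁻¹ * (M + Fintype.card ι * (M * ‖u‖)) := by gcongr; exact norm_sub_mulVec_le hM hM hA hm u
  have hmax := norm_le_max_of_norm_sub_mulVec_le hK hL hA hm (fun J ↦ hinv A J hA (hdet J)) hres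
  have habsorb : L * (D⁻¹ * (Fintype.card ι * (M * ‖u‖))) ≤ ‖u‖ / 2 := calc
    _ = (L * (Fintype.card ι * M) / D) * ‖u‖ := by ring
    _ ≤ (1 / 2) * ‖u‖ := by
      refine mul_le_mul_of_nonneg_right ?_ (norm_nonneg u)
      simp only [div_le_iff₀ hD, D]
      linarith
    _ = ‖u‖ / 2 := by ring
  have hrest : 0 ≤ L * (M + D⁻¹ * M + Fintype.card ι * (M * K)) := by positivity
  obtain h | h := le_max_iff.1 hmax <;> linarith

theorem v_tendsto_infty_uniform_general (hp : 0 < p) (hκ : 0 < κ) (hM : 0 ≤ M) {C : ℝ}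
    (hC : 0 < C) :
    ∃ R : ℝ, 0 < R ∧
      ∀ (A : Matrix ι ι ℝ) (m : ι → ℝ), (∀ i j, |A i j| ≤ M) → (∀ i, |m i| ≤ M) →
        (∀ I : Finset ι, κ ≤ |(principalSubmatrix A I).det|) →
          ∀ u : ι → ℝ, (∀ i, 0 ≤ u i) → R ≤ √(∑ i, u i ^ 2) →
            ∑ i, |(m - A *ᵥ u) i| ^ p ≠ 0 ∧
            C * ∑ i, |(m - A *ᵥ u) i| ^ p ≤ ∑ i, u i * |(m - A *ᵥ u) i| ^ p := by
  obtain ⟨T, hT⟩ := exists_norm_le_of_sum_mul_rpow_le ι hp hκ hM hC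
  refine ⟨√(Fintype.card ι) * |T| + 1, by positivity, fun A m hA hm hdet u hu hR ↦ ?_⟩
  have hlt : C * ∑ i, |(m - A *ᵥ u) i| ^ p < ∑ i, u i * |(m - A *ᵥ u) i| ^ p := by
    by_contra! hle
    have hsqrt : √(∑ i, u i ^ 2) ≤ √(Fintype.card ι) * |T| := calc
      _ ≤ √(Fintype.card ι) * ‖u‖ := sqrt_sum_sq_le_sqrt_card_mul_norm u
      _ ≤ √(Fintype.card ι) * |T| := by
        gcongr; exact (hT A m hA hm hdet u hu hle).trans (le_abs_self T)
    linarith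
  refine ⟨fun hg ↦ ?_, hlt.le⟩
  have hzero : ∀ i, |(m - A *ᵥ u) i| ^ p = 0 := by
    simpa using (Finset.sum_eq_zero_iff_of_nonneg fun i _ ↦ by positivity).1 hg
  simp only [hzero, mul_zero, Finset.sum_const_zero, lt_irrefl] at hlt

end Uniform

lemma minorM_empty {N : ℕ} (A : Matrix (Fin N) (Fin N) ℝ) (m : Fin N → ℝ) (j : Fin N) :
    minorM A m ∅ j = m j := by
  rw [minorM, Matrix.det_unique]
  rfl

lemma IsAdmissible.abs_m_le {N : ℕ} {κ : ℝ} (hκ : 0 < κ) {A : Matrix (Fin N) (Fin N) ℝ}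
    {m : Fin N → ℝ} (h : IsAdmissible κ A m) (i : Fin N) : |m i| ≤ 1 / κ := by
  have hm : κ ≤ m i := minorM_empty A m i ▸ h.2.2.2 ∅ i (Finset.notMem_empty i)
  exact (abs_of_pos (hκ.trans_le hm)).trans_le (h.2.1 i)

/-- `v(u) → ∞` as `|u| → ∞` over nonnegative `u`, uniformly in the admissible coefficients:
for every `C > 0` there is `R > 0` depending only on `C`, `N`, `p`, `κ` such that for every
admissible pair and every nonnegative `u` with `|u| ≥ R` one has `g(u) ≠ 0` and
`Σ_i u_i |f_i(u)|^p ≥ C g(u)`. -/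
theorem v_tendsto_infty_uniform {N : ℕ} (hN : 0 < N) (p κ : ℝ) (hp : 1 ≤ p) (hκ : 0 < κ) :
    ∀ C : ℝ, 0 < C → ∃ R : ℝ, 0 < R ∧
      ∀ (A : Matrix (Fin N) (Fin N) ℝ) (m : Fin N → ℝ), IsAdmissible κ A m →
        ∀ u : Fin N → ℝ, (∀ i, 0 ≤ u i) → R ≤ Real.sqrt (∑ i, u i ^ 2) →
          (∑ i, |fComp A m u i| ^ p) ≠ 0 ∧
          C * ∑ i, |fComp A m u i| ^ p ≤ ∑ i, u i * |fComp A m u i| ^ p := by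
  intro C hC
  obtain ⟨R, hR, h⟩ := v_tendsto_infty_uniform_general (ι := Fin N) (M := 1 / κ)
    (zero_lt_one.trans_le hp) hκ (by positivity) hC
  exact ⟨R, hR, fun A m hadm ↦ h A m hadm.1 (hadm.abs_m_le hκ) fun I ↦
    (hadm.2.2.1 I).trans (le_abs_self _)⟩
end

section
/- There exists σ > 0, depending only on N, p and κ, such that for every ε > 0 there exists δ > 0, depending only on ε, N, p and κ, with the following property: for every admissible pair (A, m) with constant κ and every u ∈ ℝ^N with u ≥ 0, g(u) ≠ 0 and v(u) < δ, there exists a nonempty index set I ⊆ {1,…,N} such that Σ_{i ∈ I} u_i + Σ_{j ∉ I} |f_j(u)| < ε and f_i(u) > σ for every i ∈ I. -/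
open MeasureTheory Filter

/-!
Let `S = {i | η ≤ u i}` for a small threshold `η`; the index set sought is `Sᶜ`. If `v(u)` is small,
then `S` is not everything, and on `S` the components `f_i(u)` are small relative to `1 + ‖u‖`.
Replacing `u` by `0` off `S` changes `f` only by `O(η)`, so Cramer's rule for the principal block
over `S`, whose determinant is at least `κ`, gives an a priori bound on `‖u‖`; hence `f` is
absolutely small on `S`. For `j ∉ S`, Cramer's rule for the bordered matrix applied to the vector
`(-u_S, 1)` shows that `Δ_{S,j}` equals `Δ_S f_j(u)` up to a small error, and `Δ_{S,j} ≥ κ` forces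
`f_j(u)` to be bounded below.
-/

open scoped Matrix Nat Topology

/-! ### Estimates from Cramer's rule -/

section Cramer

variable {n R : Type*} [Fintype n] [DecidableEq n]

theorem det_smul_eq_adjugate_mulVec [CommRing R] (M : Matrix n n R) (w : n → R) :
    M.det • w = M.adjugate *ᵥ (M *ᵥ w) := by
  rw [Matrix.mulVec_mulVec, Matrix.adjugate_mul, Matrix.smul_mulVec, Matrix.one_mulVec]

theorem adjugate_none_none [CommRing R] (M : Matrix (Option n) (Option n) R) :
    M.adjugate none none = (M.submatrix some some).det := by
  let e := (Equiv.optionEquivSumPUnit.{0} n).symm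
  have hblocks : (M.updateRow none (Pi.single none 1)).submatrix e e =
      Matrix.fromBlocks (M.submatrix some some)
        (Matrix.of fun i (_ : PUnit.{1}) => M (some i) none) 0 1 := by
    ext (a | a) (b | b) <;> simp [e, Matrix.updateRow_apply]
  rw [Matrix.adjugate_apply, ← Matrix.det_submatrix_equiv_self e, hblocks,
    Matrix.det_fromBlocks_zero₂₁, Matrix.det_one, mul_one]

end Cramer

section Estimates

variable {n R : Type*} [Fintype n] [CommRing R] [LinearOrder R] [IsStrictOrderedRing R]

theorem abs_sum_mul_le {a : n → R} {c : R} (ha : ∀ k, |a k| ≤ c) (b : n → R) :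
    |∑ k, a k * b k| ≤ c * ∑ k, |b k| := by
  rw [Finset.mul_sum]
  refine (Finset.abs_sum_le_sum_abs _ _).trans (Finset.sum_le_sum fun k _ => ?_)
  rw [abs_mul]
  exact mul_le_mul_of_nonneg_right (ha k) (abs_nonneg _)

theorem sum_le_natCast_mul_of_card_le {ι : Type*} {s : Finset ι} {d : ℕ} {g : ι → R} {ρ : R}
    (hs : s.card ≤ d) (hρ : 0 ≤ ρ) (hg : ∀ i ∈ s, g i ≤ ρ) : ∑ i ∈ s, g i ≤ d * ρ := by
  calc ∑ i ∈ s, g i ≤ s.card • ρ := Finset.sum_le_card_nsmul _ _ _ hg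
    _ = s.card * ρ := nsmul_eq_mul _ _
    _ ≤ d * ρ := by gcongr

variable [DecidableEq n]

theorem abs_det_le_of_card_le {M : Matrix n n R} {B : R} {d : ℕ} (hB : 1 ≤ B)
    (hM : ∀ i j, |M i j| ≤ B) (hd : Fintype.card n ≤ d) : |M.det| ≤ d ! * B ^ d := by
  calc |M.det| ≤ (Fintype.card n)! • B ^ Fintype.card n :=
        Matrix.det_le (abv := AbsoluteValue.abs) hM
    _ = ((Fintype.card n)! : R) * B ^ Fintype.card n := nsmul_eq_mul _ _
    _ ≤ d ! * B ^ d := by gcongr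

theorem abs_adjugate_le_of_card_le {M : Matrix n n R} {B : R} {d : ℕ} (hB : 1 ≤ B)
    (hM : ∀ i j, |M i j| ≤ B) (hd : Fintype.card n ≤ d) (i j : n) :
    |M.adjugate i j| ≤ d ! * B ^ d := by
  rw [Matrix.adjugate_apply]
  refine abs_det_le_of_card_le hB (fun a b => ?_) hd
  rw [Matrix.updateRow_apply, Pi.single_apply]
  split_ifs
  · simpa only [abs_one] using hB
  · simpa only [abs_zero] using zero_le_one.trans hB
  · exact hM a b

theorem abs_det_mul_le {M : Matrix n n R} {c : R} {i : n} (hc : ∀ k, |M.adjugate i k| ≤ c)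
    (w : n → R) : |M.det * w i| ≤ c * ∑ k, |(M *ᵥ w) k| := by
  have hcramer : M.det * w i = ∑ k, M.adjugate i k * (M *ᵥ w) k :=
    congrFun (det_smul_eq_adjugate_mulVec M w) i
  rw [hcramer]
  exact abs_sum_mul_le hc _

theorem abs_det_sub_det_submatrix_mul_le {M : Matrix (Option n) (Option n) R} {c : R}
    (hc : ∀ k, |M.adjugate none (some k)| ≤ c) {w : Option n → R} (hw : w none = 1) :
    |M.det - (M.submatrix some some).det * (M *ᵥ w) none| ≤ c * ∑ k, |(M *ᵥ w) (some k)| := by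
  have hcramer : M.det * w none = ∑ k, M.adjugate none k * (M *ᵥ w) k :=
    congrFun (det_smul_eq_adjugate_mulVec M w) none
  rw [hw, mul_one, Fintype.sum_option, adjugate_none_none] at hcramer
  rw [hcramer, add_sub_cancel_left]
  exact abs_sum_mul_le hc _

end Estimates

/-! ### Weighted averages -/

theorem abs_le_mul_of_weighted_sum_le {ι : Type*} [Fintype ι] {u f : ι → ℝ} {p δ η τ F : ℝ}
    (hp : 0 < p) (hη : 0 < η) (hτ : 0 ≤ τ) (hδ : 0 ≤ δ)
    (hδη : Fintype.card ι * δ ≤ η * τ ^ p) (hu : ∀ i, 0 ≤ u i) (hF : ∀ i, |f i| ≤ F)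
    (hv : ∑ i, u i * |f i| ^ p ≤ δ * ∑ i, |f i| ^ p) {i : ι} (hi : η ≤ u i) :
    |f i| ≤ τ * F := by
  have hF₀ : 0 ≤ F := (abs_nonneg _).trans (hF i)
  have hsum : ∑ k, |f k| ^ p ≤ Fintype.card ι * F ^ p := by
    rw [← nsmul_eq_mul]
    exact Finset.sum_le_card_nsmul _ _ _ fun k _ => Real.rpow_le_rpow (abs_nonneg _) (hF k) hp.le
  have hpow : η * |f i| ^ p ≤ η * (τ * F) ^ p := by
    calc η * |f i| ^ p ≤ u i * |f i| ^ p := by gcongr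
      _ ≤ ∑ k, u k * |f k| ^ p :=
        Finset.single_le_sum (f := fun k => u k * |f k| ^ p)
          (fun k _ => mul_nonneg (hu k) (by positivity)) (Finset.mem_univ i)
      _ ≤ δ * (Fintype.card ι * F ^ p) := hv.trans (by gcongr)
      _ = Fintype.card ι * δ * F ^ p := by ring
      _ ≤ η * τ ^ p * F ^ p := by gcongr
      _ = η * (τ * F) ^ p := by rw [Real.mul_rpow hτ hF₀, mul_assoc]
  exact (Real.rpow_le_rpow_iff (abs_nonneg _) (by positivity) hp).1 (le_of_mul_le_mul_left hpow hη)

theorem exists_lt_of_weighted_sum_lt {ι R : Type*} [Fintype ι] [Semiring R] [LinearOrder R]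
    [IsStrictOrderedRing R] {u w : ι → R} {η : R} (hw : ∀ i, 0 ≤ w i)
    (hv : ∑ i, u i * w i < η * ∑ i, w i) : ∃ i, u i < η := by
  rw [Finset.mul_sum] at hv
  obtain ⟨i, -, hi⟩ := Finset.exists_lt_of_sum_lt hv
  exact ⟨i, lt_of_mul_lt_mul_right hi (hw i)⟩

/-! ### Truncated vectors -/

theorem norm_sub_piecewise_zero_le {ι : Type*} [Fintype ι] [DecidableEq ι] {u : ι → ℝ}
    {S : Finset ι} {η : ℝ} (hη : 0 ≤ η) (hu : ∀ i ∉ S, |u i| ≤ η) :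
    ‖u - S.piecewise u 0‖ ≤ η := by
  refine (pi_norm_le_iff_of_nonneg hη).2 fun i => ?_
  by_cases hi : i ∈ S
  · simpa [hi] using hη
  · simpa [hi] using hu i hi

theorem mulVec_eq_sum_of_support_subset {ι n R : Type*} [Fintype n] [NonUnitalNonAssocSemiring R]
    {A : Matrix ι n R} {x : n → R} {S : Finset n} (hx : ∀ i ∉ S, x i = 0) (i : ι) :
    (A *ᵥ x) i = ∑ k : S, A i k * x k := by
  rw [Finset.sum_coe_sort S fun k => A i k * x k]
  refine (Finset.sum_subset S.subset_univ fun k _ hk => ?_).symm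
  rw [hx k hk, mul_zero]

section

variable {N : ℕ} {A : Matrix (Fin N) (Fin N) ℝ} {m u x : Fin N → ℝ} {S : Finset (Fin N)}

/-! ### The affine map `f` -/

theorem fComp_sub_fComp (w : Fin N → ℝ) (i : Fin N) :
    fComp A m u i - fComp A m w i = (A *ᵥ (w - u)) i := by
  rw [Matrix.mulVec_sub, Pi.sub_apply]
  exact sub_sub_sub_cancel_left _ _ _

theorem abs_fComp_sub_fComp_le {B : ℝ} (hA : ∀ i j, |A i j| ≤ B) (w : Fin N → ℝ) (i : Fin N) :
    |fComp A m u i - fComp A m w i| ≤ N * B * ‖u - w‖ := by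
  have hB : 0 ≤ B := (abs_nonneg _).trans (hA i i)
  calc |fComp A m u i - fComp A m w i| = |∑ k, A i k * (w - u) k| := by
        rw [fComp_sub_fComp]; rfl
    _ ≤ B * ∑ k, |(w - u) k| := abs_sum_mul_le (hA i) _
    _ ≤ B * (N * ‖w - u‖) := by
        gcongr
        exact sum_le_natCast_mul_of_card_le (card_finset_fin_le _) (norm_nonneg _)
          fun k _ => norm_le_pi_norm (w - u) k
    _ = N * B * ‖u - w‖ := by rw [norm_sub_rev]; ring

theorem abs_fComp_le {B : ℝ} (hA : ∀ i j, |A i j| ≤ B) (hm : ∀ i, |m i| ≤ B) (i : Fin N) :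
    |fComp A m u i| ≤ (N + 1) * B * (1 + ‖u‖) := by
  have hB : 0 ≤ B := (abs_nonneg _).trans (hm i)
  have hdist := abs_fComp_sub_fComp_le (m := m) (u := u) hA 0 i
  have hzero : fComp A m 0 i = m i := by simp [fComp]
  rw [hzero, sub_zero] at hdist
  have hNB : (0 : ℝ) ≤ N * B := by positivity
  have hBu : 0 ≤ B * ‖u‖ := by positivity
  linarith [abs_sub_abs_le_abs_sub (fComp A m u i) (m i), hm i]

/-! ### Minors and admissible pairs -/

/-- The matrix whose determinant is `minorM A m S j`. The index `none` stands for the row `j` and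
for the column `m`. -/
def borderedMatrix (A : Matrix (Fin N) (Fin N) ℝ) (m : Fin N → ℝ) (S : Finset (Fin N))
    (j : Fin N) : Matrix (Option S) (Option S) ℝ :=
  Matrix.of fun k l => l.elim (m (k.elim j (↑))) fun l' => A (k.elim j (↑)) l'

theorem minorM_eq_det_borderedMatrix (j : Fin N) :
    minorM A m S j = (borderedMatrix A m S j).det := by
  rw [minorM]
  congr 1
  ext (_ | k) (_ | l) <;> rfl

theorem borderedMatrix_mulVec (hx : ∀ i ∉ S, x i = 0) (j : Fin N) (k : Option S) :
    (borderedMatrix A m S j *ᵥ fun l => l.elim 1 fun l' => -x l') k =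
      fComp A m x (k.elim j (↑)) := by
  have hsum := mulVec_eq_sum_of_support_subset (A := A) hx (k.elim j (↑))
  simp only [Matrix.mulVec, dotProduct] at hsum
  simp [fComp, hsum, borderedMatrix, Matrix.mulVec, dotProduct, sub_eq_add_neg]

end

/-- An upper bound for all minors and cofactors that occur for an admissible pair, bordered ones
included. -/
noncomputable def minorBound (N : ℕ) (κ : ℝ) : ℝ :=
  (N + 1)! * (1 / κ) ^ (N + 1)

/-- The a priori bound on `1 + ‖u‖` in `IsAdmissible.one_add_norm_le`. -/
noncomputable def aprioriBound (N : ℕ) (κ : ℝ) : ℝ :=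
  4 + 2 * minorBound N κ * N * (N + 1) / κ ^ 2

theorem minorBound_pos {N : ℕ} {κ : ℝ} (hκ : 0 < κ) : 0 < minorBound N κ := by
  unfold minorBound
  positivity

theorem aprioriBound_pos {N : ℕ} {κ : ℝ} (hκ : 0 < κ) : 0 < aprioriBound N κ := by
  have := minorBound_pos (N := N) hκ
  unfold aprioriBound
  positivity

namespace IsAdmissible

variable {N : ℕ} {κ : ℝ} {A : Matrix (Fin N) (Fin N) ℝ} {m u x : Fin N → ℝ} {S : Finset (Fin N)}

theorem one_le_one_div (h : IsAdmissible κ A m) (hκ : 0 < κ) : 1 ≤ 1 / κ := by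
  have hempty : minorP A ∅ = 1 := Matrix.det_isEmpty
  exact (one_le_div hκ).2 (hempty ▸ h.2.2.1 ∅)

theorem le_m (h : IsAdmissible κ A m) (i : Fin N) : κ ≤ m i := by
  have hempty : minorM A m ∅ i = m i := by rw [minorM, Matrix.det_unique]; rfl
  exact hempty ▸ h.2.2.2 ∅ i (Finset.notMem_empty i)

theorem abs_m_le_s7 (h : IsAdmissible κ A m) (hκ : 0 < κ) (i : Fin N) : |m i| ≤ 1 / κ := by
  rw [abs_of_nonneg (hκ.le.trans (h.le_m i))]
  exact h.2.1 i

theorem minorP_le (h : IsAdmissible κ A m) (hκ : 0 < κ) : minorP A S ≤ minorBound N κ :=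
  (le_abs_self _).trans <| abs_det_le_of_card_le (h.one_le_one_div hκ) (fun i j => h.1 i j)
    (by simpa using (card_finset_fin_le S).trans N.le_succ)

theorem mul_abs_le_minorBound_mul_sum (h : IsAdmissible κ A m) (hκ : 0 < κ)
    (hx : ∀ i ∉ S, x i = 0) {k : Fin N} (hk : k ∈ S) :
    κ * |x k| ≤ minorBound N κ * ∑ i ∈ S, |(A *ᵥ x) i| := by
  have hcard : Fintype.card S ≤ N + 1 := by
    simpa using (card_finset_fin_le S).trans N.le_succ
  let M : Matrix S S ℝ := A.submatrix (↑) (↑)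
  have hadj (l : S) : |M.adjugate ⟨k, hk⟩ l| ≤ minorBound N κ :=
    abs_adjugate_le_of_card_le (M := M) (h.one_le_one_div hκ) (fun i j => h.1 i j) hcard _ l
  have hcramer := abs_det_mul_le hadj fun l => x l
  have hmulVec (i : S) : (M *ᵥ fun l => x l) i = (A *ᵥ x) i :=
    (mulVec_eq_sum_of_support_subset (A := A) hx i).symm
  simp only [hmulVec, abs_mul] at hcramer
  rw [Finset.sum_coe_sort S fun i => |(A *ᵥ x) i|] at hcramer
  refine le_trans ?_ hcramer
  gcongr
  exact (h.2.2.1 S).trans (le_abs_self _)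

theorem le_add_minorP_mul_fComp (h : IsAdmissible κ A m) (hκ : 0 < κ) (hx : ∀ i ∉ S, x i = 0)
    {j : Fin N} (hj : j ∉ S) :
    κ ≤ minorBound N κ * ∑ i ∈ S, |fComp A m x i| + minorP A S * fComp A m x j := by
  have hentry (k l : Option S) : |borderedMatrix A m S j k l| ≤ 1 / κ := by
    rcases l with _ | l
    · exact h.abs_m_le_s7 hκ _
    · exact h.1 _ _
  have hcard : Fintype.card (Option S) ≤ N + 1 := by
    simpa using card_finset_fin_le S
  have hcramer := abs_det_sub_det_submatrix_mul_le
    (fun _ => abs_adjugate_le_of_card_le (h.one_le_one_div hκ) hentry hcard _ _)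
    (w := fun l => l.elim 1 fun l' => -x l') rfl
  simp only [borderedMatrix_mulVec hx, Option.elim_none, Option.elim_some,
    ← minorM_eq_det_borderedMatrix] at hcramer
  rw [Finset.sum_coe_sort S fun i => |fComp A m x i|] at hcramer
  have hupper : minorM A m S j - minorP A S * fComp A m x j ≤
      minorBound N κ * ∑ i ∈ S, |fComp A m x i| := (le_abs_self _).trans hcramer
  linarith [h.2.2.2 S j hj]

theorem div_le_fComp_of_support_subset (h : IsAdmissible κ A m) (hκ : 0 < κ)
    (hx : ∀ i ∉ S, x i = 0) {ρ : ℝ} (hρ : 0 ≤ ρ) (hρκ : 2 * minorBound N κ * (N * ρ) ≤ κ)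
    (hf : ∀ i ∈ S, |fComp A m x i| ≤ ρ) {j : Fin N} (hj : j ∉ S) :
    κ / (2 * minorBound N κ) ≤ fComp A m x j := by
  have hC := minorBound_pos (N := N) hκ
  have hsum := mul_le_mul_of_nonneg_left
    (sum_le_natCast_mul_of_card_le (card_finset_fin_le S) hρ hf) hC.le
  have hprod : κ / 2 ≤ minorP A S * fComp A m x j := by
    linarith [h.le_add_minorP_mul_fComp hκ hx hj]
  have hpos : 0 < fComp A m x j :=
    pos_of_mul_pos_right ((half_pos hκ).trans_le hprod) (hκ.le.trans (h.2.2.1 S))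
  have hle := mul_le_mul_of_nonneg_right (h.minorP_le (S := S) hκ) hpos.le
  rw [div_le_iff₀ (by positivity)]
  linarith

theorem abs_mulVec_le (h : IsAdmissible κ A m) (hκ : 0 < κ) (hux : ‖u - x‖ ≤ 1) (i : Fin N) :
    |(A *ᵥ x) i| ≤ (N + 1) / κ + |fComp A m u i| := by
  have hdist : |fComp A m u i - fComp A m x i| ≤ N * (1 / κ) * 1 :=
    (abs_fComp_sub_fComp_le h.1 x i).trans (by gcongr)
  have hAx : (A *ᵥ x) i = m i - fComp A m u i + (fComp A m u i - fComp A m x i) := by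
    rw [sub_add_sub_cancel]
    exact (sub_sub_cancel _ _).symm
  calc |(A *ᵥ x) i| ≤ |m i| + |fComp A m u i| + |fComp A m u i - fComp A m x i| := by
        rw [hAx]
        exact (abs_add_le _ _).trans (add_le_add_left (abs_sub _ _) _)
    _ ≤ 1 / κ + |fComp A m u i| + N * (1 / κ) * 1 := by gcongr; exact h.abs_m_le_s7 hκ i
    _ = (N + 1) / κ + |fComp A m u i| := by ring

theorem one_add_norm_le (h : IsAdmissible κ A m) (hκ : 0 < κ) {θ : ℝ} (hθ : 0 ≤ θ)
    (hθκ : 2 * minorBound N κ * (N * θ) ≤ κ) (huS : ∀ i ∉ S, |u i| ≤ 1)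
    (hf : ∀ i ∈ S, |fComp A m u i| ≤ θ * (1 + ‖u‖)) : 1 + ‖u‖ ≤ aprioriBound N κ := by
  set C := minorBound N κ with hCdef
  have hC : 0 < C := minorBound_pos hκ
  let x := S.piecewise u 0
  have hx (i) (hi : i ∉ S) : x i = 0 := S.piecewise_eq_of_notMem _ _ hi
  have hAx : ∀ i ∈ S, |(A *ᵥ x) i| ≤ (N + 1) / κ + θ * (1 + ‖u‖) := fun i hi =>
    (h.abs_mulVec_le hκ (norm_sub_piecewise_zero_le zero_le_one huS) i).trans
      (add_le_add_right (hf i hi) _)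
  have hsum := mul_le_mul_of_nonneg_left
    (sum_le_natCast_mul_of_card_le (card_finset_fin_le S) (by positivity) hAx) hC.le
  have hcoord (k : Fin N) : |u k| ≤ 1 + C * (N * ((N + 1) / κ + θ * (1 + ‖u‖))) / κ := by
    by_cases hk : k ∈ S
    · have hxk : κ * |x k| ≤ _ := (h.mul_abs_le_minorBound_mul_sum hκ hx hk).trans hsum
      rw [← S.piecewise_eq_of_mem u 0 hk]
      exact ((le_div_iff₀' hκ).2 hxk).trans (le_add_of_nonneg_left zero_le_one)
    · exact (huS k hk).trans (le_add_of_nonneg_right (by positivity))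
  have hnorm : ‖u‖ ≤ _ := (pi_norm_le_iff_of_nonneg (by positivity)).2 hcoord
  have habsorb : C * (N * ((N + 1) / κ + θ * (1 + ‖u‖))) / κ ≤
      C * N * (N + 1) / κ ^ 2 + (1 + ‖u‖) / 2 := by
    calc C * (N * ((N + 1) / κ + θ * (1 + ‖u‖))) / κ
        = C * N * (N + 1) / κ ^ 2 + 2 * C * (N * θ) * ((1 + ‖u‖) / (2 * κ)) := by
          field_simp
      _ ≤ C * N * (N + 1) / κ ^ 2 + κ * ((1 + ‖u‖) / (2 * κ)) := by gcongr
      _ = C * N * (N + 1) / κ ^ 2 + (1 + ‖u‖) / 2 := by field_simp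
  have hK : aprioriBound N κ = 4 + 2 * (C * N * (N + 1) / κ ^ 2) := by
    rw [aprioriBound, ← hCdef]
    ring
  linarith

theorem div_sub_le_fComp (h : IsAdmissible κ A m) (hκ : 0 < κ) {ρ η : ℝ} (hρ : 0 ≤ ρ) (hη : 0 ≤ η)
    (hρη : 2 * minorBound N κ * (N * (ρ + N * (1 / κ) * η)) ≤ κ) (huS : ∀ i ∉ S, |u i| ≤ η)
    (hf : ∀ i ∈ S, |fComp A m u i| ≤ ρ) {j : Fin N} (hj : j ∉ S) :
    κ / (2 * minorBound N κ) - N * (1 / κ) * η ≤ fComp A m u j := by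
  let x := S.piecewise u 0
  have hdist (i : Fin N) : |fComp A m u i - fComp A m x i| ≤ N * (1 / κ) * η :=
    (abs_fComp_sub_fComp_le h.1 x i).trans
      (mul_le_mul_of_nonneg_left (norm_sub_piecewise_zero_le hη huS) (by positivity))
  have hfx : ∀ i ∈ S, |fComp A m x i| ≤ ρ + N * (1 / κ) * η := fun i hi => by
    have := abs_sub_abs_le_abs_sub (fComp A m x i) (fComp A m u i)
    rw [abs_sub_comm] at this
    linarith [hf i hi, hdist i]
  have hxj := h.div_le_fComp_of_support_subset hκ
    (fun i hi => S.piecewise_eq_of_notMem u 0 hi) (by positivity) hρη hfx hj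
  linarith [(abs_le.1 (hdist j)).1]

end IsAdmissible

/-! ### The choice of the threshold -/

theorem eventually_nhdsGT_zero_mul_lt (a : ℝ) {b : ℝ} (hb : 0 < b) :
    ∀ᶠ t : ℝ in 𝓝[>] 0, t * a < b := by
  have htendsto : Tendsto (fun t : ℝ => t * a) (𝓝 0) (𝓝 0) := by
    simpa only [zero_mul] using (continuous_mul_const a).tendsto 0
  exact (htendsto.mono_left nhdsWithin_le_nhds).eventually (gt_mem_nhds hb)

theorem exists_threshold_small_u_and_large_f {N : ℕ} {κ ε : ℝ} (hκ : 0 < κ) (hε : 0 < ε) :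
    ∃ t : ℝ, 0 < t ∧ ∀ (A : Matrix (Fin N) (Fin N) ℝ) (m : Fin N → ℝ), IsAdmissible κ A m →
      ∀ u : Fin N → ℝ, (∀ i, 0 ≤ u i) → (∃ i, u i < t) →
        (∀ i, t ≤ u i → |fComp A m u i| ≤ t * ((N + 1) * (1 / κ) * (1 + ‖u‖))) →
        ∃ I : Finset (Fin N), I.Nonempty ∧
          (∑ i ∈ I, u i) + (∑ j ∈ Iᶜ, |fComp A m u j|) < ε ∧
          ∀ i ∈ I, κ / (4 * minorBound N κ) < fComp A m u i := by
  have hC := minorBound_pos (N := N) hκ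
  have hK := aprioriBound_pos (N := N) hκ
  set C := minorBound N κ
  let L := (N + 1) * (1 / κ) * aprioriBound N κ
  obtain ⟨t, hone, happriori, hminor, hshift, hsum, ht : 0 < t⟩ :=
    ((eventually_nhdsGT_zero_mul_lt 1 one_pos).and <|
      (eventually_nhdsGT_zero_mul_lt (2 * C * (N * ((N + 1) * (1 / κ)))) hκ).and <|
      (eventually_nhdsGT_zero_mul_lt (2 * C * (N * (L + N * (1 / κ)))) hκ).and <|
      (eventually_nhdsGT_zero_mul_lt (N * (1 / κ)) (by positivity : 0 < κ / (4 * C))).and <|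
      (eventually_nhdsGT_zero_mul_lt (N + N * L) hε).and self_mem_nhdsWithin).exists
  refine ⟨t, ht, fun A m h u hu ⟨i₀, hi₀⟩ hf => ?_⟩
  let I : Finset (Fin N) := {i | u i < t}
  have hI (i) : i ∈ I ↔ u i < t := by simp [I]
  have hIc (i) : i ∈ Iᶜ ↔ t ≤ u i := by simp [I]
  have hu_le (i) (hi : i ∉ Iᶜ) : |u i| ≤ t := by
    rw [hIc, not_le] at hi
    exact (abs_of_nonneg (hu i)).trans_le hi.le
  have hnorm : 1 + ‖u‖ ≤ aprioriBound N κ :=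
    h.one_add_norm_le (S := Iᶜ) hκ (θ := t * ((N + 1) * (1 / κ))) (by positivity)
      (by linarith) (fun i hi => (hu_le i hi).trans (by linarith))
      fun i hi => (hf i ((hIc i).1 hi)).trans_eq (mul_assoc _ _ _).symm
  have hfL : ∀ i ∈ Iᶜ, |fComp A m u i| ≤ t * L := fun i hi =>
    (hf i ((hIc i).1 hi)).trans (by unfold L; gcongr)
  refine ⟨I, ⟨i₀, (hI i₀).2 hi₀⟩, ?_, fun j hj => ?_⟩
  · have hsum_u := sum_le_natCast_mul_of_card_le (card_finset_fin_le I) ht.le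
      fun i hi => ((hI i).1 hi).le
    have hsum_f := sum_le_natCast_mul_of_card_le (card_finset_fin_le Iᶜ) (by positivity) hfL
    linarith
  · have hlower := h.div_sub_le_fComp hκ (by positivity) ht.le (by linarith) hu_le hfL
      (j := j) (by simpa using hj)
    have hhalf : κ / (2 * C) = 2 * (κ / (4 * C)) := by ring
    linarith

theorem exists_index_set_small_u_and_large_f_general {N : ℕ} {κ : ℝ} (hκ : 0 < κ) :
    ∃ σ : ℝ, 0 < σ ∧ ∀ p : ℝ, 0 < p → ∀ ε : ℝ, 0 < ε → ∃ δ : ℝ, 0 < δ ∧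
      ∀ (A : Matrix (Fin N) (Fin N) ℝ) (m : Fin N → ℝ), IsAdmissible κ A m →
        ∀ u : Fin N → ℝ, (∀ i, 0 ≤ u i) → (∑ i, |fComp A m u i| ^ p) ≠ 0 →
          (∑ i, u i * |fComp A m u i| ^ p) / (∑ i, |fComp A m u i| ^ p) < δ →
          ∃ I : Finset (Fin N), I.Nonempty ∧
            (∑ i ∈ I, u i) + (∑ j ∈ Iᶜ, |fComp A m u j|) < ε ∧
            ∀ i ∈ I, σ < fComp A m u i := by
  refine ⟨κ / (4 * minorBound N κ), div_pos hκ (mul_pos four_pos (minorBound_pos hκ)),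
    fun p hp ε hε => ?_⟩
  obtain ⟨t, ht, hthreshold⟩ := exists_threshold_small_u_and_large_f (N := N) hκ hε
  let δ := min t (t * t ^ p / (N + 1))
  have hδ : 0 < δ := by positivity
  have hδt : Fintype.card (Fin N) * δ ≤ t * t ^ p := by
    calc Fintype.card (Fin N) * δ ≤ (N + 1) * (t * t ^ p / (N + 1)) := by
          gcongr
          · simp
          · exact min_le_right _ _
      _ = t * t ^ p := by field_simp
  refine ⟨δ, hδ, fun A m h u hu hg hv => ?_⟩
  have hg_pos : 0 < ∑ i, |fComp A m u i| ^ p := by positivity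
  rw [div_lt_iff₀ hg_pos] at hv
  refine hthreshold A m h u hu ?_ fun i hi => ?_
  · exact exists_lt_of_weighted_sum_lt (fun i => by positivity)
      (hv.trans_le (by gcongr; exact min_le_left _ _))
  · exact abs_le_mul_of_weighted_sum_le hp ht ht.le hδ.le hδt hu
      (abs_fComp_le h.1 (h.abs_m_le_s7 hκ)) hv.le hi

/-- There is `σ > 0` depending only on `N`, `p`, `κ` such that for every `ε > 0` there is
`δ > 0` depending only on `ε`, `N`, `p`, `κ` with: for every admissible pair and every
nonnegative `u` with `g(u) ≠ 0` and `v(u) < δ`, there is a nonempty index set `I` with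
`Σ_{i ∈ I} u_i + Σ_{j ∉ I} |f_j(u)| < ε` and `f_i(u) > σ` for all `i ∈ I`. -/
theorem exists_index_set_small_u_and_large_f {N : ℕ} (hN : 0 < N) (p κ : ℝ)
    (hp : 1 ≤ p) (hκ : 0 < κ) :
    ∃ σ : ℝ, 0 < σ ∧ ∀ ε : ℝ, 0 < ε → ∃ δ : ℝ, 0 < δ ∧
      ∀ (A : Matrix (Fin N) (Fin N) ℝ) (m : Fin N → ℝ), IsAdmissible κ A m →
        ∀ u : Fin N → ℝ, (∀ i, 0 ≤ u i) → (∑ i, |fComp A m u i| ^ p) ≠ 0 →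
          (∑ i, u i * |fComp A m u i| ^ p) / (∑ i, |fComp A m u i| ^ p) < δ →
          ∃ I : Finset (Fin N), I.Nonempty ∧
            (∑ i ∈ I, u i) + (∑ j ∈ Iᶜ, |fComp A m u j|) < ε ∧
            ∀ i ∈ I, σ < fComp A m u i := by
  obtain ⟨σ, hσ, hmain⟩ := exists_index_set_small_u_and_large_f_general (N := N) hκ
  exact ⟨σ, hσ, hmain p (zero_lt_one.trans_le hp)⟩
end
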